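/- arXiv:2310.08119 — 2 statements merged into one kernel-verified Lean document; each statement's English description precedes it below -/
import Mathlib

section
/- With E, Φ as above and the Nehari manifold 𝒩 = {u ∈ E \ {0} : Φ'(u)u = 0}, the map m : S → 𝒩 given by m(w) = s_w·w (where S is the unit sphere of E and s_w is the unique maximum point of s ↦ Φ(sw)) is a homeomorphism, with inverse u ↦ u/‖u‖. -/
open scoped BigOperators
open Filter Topology

noncomputable section

abbrev Vtx (N : ℕ) := Fin N → ℤ

def LatAdj {N : ℕ} (x y : Vtx N) : Prop := (∑ i, |x i - y i|) = 1

instance {N : ℕ} (x y : Vtx N) : Decidable (LatAdj x y) := by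
  unfold LatAdj; infer_instance

/-- `∑_x |u x|^p`. -/
noncomputable def lpSum (N : ℕ) (p : ℝ) (u : Vtx N → ℝ) : ℝ := ∑' x, |u x| ^ p

/-- `(1/2) ∑_{x∼y} |u x − u y|^p` (sum over ordered pairs of adjacent vertices). -/
noncomputable def pEnergy (N : ℕ) (p : ℝ) (u : Vtx N → ℝ) : ℝ :=
  (1/2) * ∑' z : Vtx N × Vtx N, if LatAdj z.1 z.2 then |u z.1 - u z.2| ^ p else 0

/-- `(1/2) ∑_{x∼y} |∇_{xy}u|^{p−2} (∇_{xy}u)(∇_{xy}v)`. -/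
noncomputable def gradPair (N : ℕ) (p : ℝ) (u v : Vtx N → ℝ) : ℝ :=
  (1/2) * ∑' z : Vtx N × Vtx N,
    if LatAdj z.1 z.2 then |u z.2 - u z.1| ^ (p - 2) * (u z.2 - u z.1) * (v z.2 - v z.1) else 0

/-- discrete p-Laplacian. -/
noncomputable def pLap (N : ℕ) (p : ℝ) (u : Vtx N → ℝ) (x : Vtx N) : ℝ :=
  ∑' y, if LatAdj x y then |u y - u x| ^ (p - 2) * (u y - u x) else 0

/-- `‖u‖^p` for the potential norm. -/
noncomputable def eNormP (N : ℕ) (p : ℝ) (V : Vtx N → ℝ) (u : Vtx N → ℝ) : ℝ :=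
  pEnergy N p u + ∑' x, V x * |u x| ^ p

/-- the potential norm `‖u‖`. -/
noncomputable def eNorm (N : ℕ) (p : ℝ) (V : Vtx N → ℝ) (u : Vtx N → ℝ) : ℝ :=
  (eNormP N p V u) ^ (1/p)

/-- `F(x,t) = ∫₀^t f(x,s) ds`. -/
noncomputable def Fprim {N : ℕ} (f : Vtx N → ℝ → ℝ) (x : Vtx N) (t : ℝ) : ℝ :=
  ∫ s in (0:ℝ)..t, f x s

/-- the variational functional `Φ`. -/
noncomputable def PhiFun (N : ℕ) (p : ℝ) (V : Vtx N → ℝ) (f : Vtx N → ℝ → ℝ)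
    (u : Vtx N → ℝ) : ℝ :=
  (1/p) * eNormP N p V u - ∑' x, Fprim f x (u x)

/-- `Φ'(u)v`. -/
noncomputable def PhiDeriv (N : ℕ) (p : ℝ) (V : Vtx N → ℝ) (f : Vtx N → ℝ → ℝ)
    (u v : Vtx N → ℝ) : ℝ :=
  gradPair N p u v + (∑' x, V x * |u x| ^ (p - 2) * u x * v x) - ∑' x, f x (u x) * v x

/-- membership in `E = ℓ^p`. -/
def memE (N : ℕ) (p : ℝ) (u : Vtx N → ℝ) : Prop := Summable fun x => |u x| ^ p

/-- the Nehari manifold. -/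
def Nehari (N : ℕ) (p : ℝ) (V : Vtx N → ℝ) (f : Vtx N → ℝ → ℝ) : Set (Vtx N → ℝ) :=
  {u | memE N p u ∧ u ≠ 0 ∧ PhiDeriv N p V f u u = 0}

abbrev Elp (N : ℕ) (p : ℝ) := lp (fun _ : Vtx N => ℝ) (ENNReal.ofReal p)

section helpers
variable {N : ℕ} {p : ℝ} {f : Vtx N → ℝ → ℝ}

structure GoodF (N : ℕ) (p : ℝ) (f : Vtx N → ℝ → ℝ) : Prop where
  hp : 1 < p
  hfc : ∀ x, Continuous (f x)
  hA3 : ∀ ε > (0:ℝ), ∃ δ > (0:ℝ), ∀ x u, |u| < δ → |f x u| ≤ ε * |u| ^ (p - 1)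
  hA4 : ∀ x, StrictMonoOn (fun u => f x u / |u| ^ (p - 1)) (Set.Iio 0) ∧
               StrictMonoOn (fun u => f x u / |u| ^ (p - 1)) (Set.Ioi 0)
  hA5 : ∀ M : ℝ, ∃ R > (0:ℝ), ∀ x u, R ≤ |u| → M ≤ Fprim f x u / |u| ^ p

theorem GoodF.small (h : GoodF N p f) (ε : ℝ) (hε : 0 < ε) :
    ∃ δ > (0:ℝ), ∀ x u, |u| < δ → |f x u * u| ≤ ε * |u| ^ p := by
  obtain ⟨δ, hδ, H⟩ := h.hA3 ε hε
  refine ⟨δ, hδ, fun x u hu => ?_⟩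
  have := H x u hu
  rw [abs_mul]
  rcases eq_or_ne u 0 with rfl | hne
  · simp only [abs_zero, mul_zero]
    positivity
  · have hpos : 0 < |u| := abs_pos.2 hne
    calc |f x u| * |u| ≤ (ε * |u| ^ (p-1)) * |u| := by gcongr
      _ = ε * |u| ^ p := by
        rw [mul_assoc, ← Real.rpow_add_one hpos.ne']; congr 2; ring

theorem GoodF.mono (h : GoodF N p f) (x : Vtx N) {a s t : ℝ} (ha : a ≠ 0) (hs : 0 < s)
    (hst : s < t) : f x (s * a) * (s * a) / s ^ p < f x (t * a) * (t * a) / t ^ p := by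
  have ht : 0 < t := hs.trans hst
  have hapos : 0 < |a| := abs_pos.2 ha
  have key : ∀ r : ℝ, 0 < r → f x (r * a) * (r * a) / r ^ p =
      (f x (r * a) / |r * a| ^ (p - 1)) * (a * |a| ^ (p - 1)) := by
    intro r hr
    rw [abs_mul, abs_of_pos hr, Real.mul_rpow hr.le hapos.le, Real.rpow_sub_one hr.ne']
    have h1 := Real.rpow_pos_of_pos hr p
    have h2 := Real.rpow_pos_of_pos hapos (p-1)
    field_simp
  rw [key s hs, key t ht]
  have h2 := Real.rpow_pos_of_pos hapos (p-1)
  rcases lt_or_gt_of_ne ha with hneg | hpos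
  · have := (h.hA4 x).1 (Set.mem_Iio.2 (mul_neg_of_pos_of_neg ht hneg))
      (Set.mem_Iio.2 (mul_neg_of_pos_of_neg hs hneg)) (mul_lt_mul_of_neg_right hst hneg)
    exact mul_lt_mul_of_neg_right this (mul_neg_of_neg_of_pos hneg h2)
  · have := (h.hA4 x).2 (Set.mem_Ioi.2 (mul_pos hs hpos))
      (Set.mem_Ioi.2 (mul_pos ht hpos)) (mul_lt_mul_of_pos_right hst hpos)
    exact mul_lt_mul_of_pos_right this (mul_pos hpos h2)

theorem GoodF.pos (h : GoodF N p f) (x : Vtx N) {u : ℝ} (hu : u ≠ 0) : 0 < f x u * u := by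
  by_contra! hneg
  have h1 := h.mono x (s := 1/2) (t := 1) hu (by norm_num) (by norm_num)
  simp only [one_mul, Real.one_rpow, div_one] at h1
  set c := f x (1/2 * u) * (1/2 * u) / (1/2 : ℝ) ^ p with hc
  have hcneg : c < 0 := by linarith
  have hup : 0 < |u| ^ p := Real.rpow_pos_of_pos (abs_pos.2 hu) p
  obtain ⟨δ, hδ, H⟩ := h.small (-c / |u| ^ p) (div_pos (by linarith) hup)
  obtain ⟨r, hr0, hr⟩ := exists_between (show (0:ℝ) < min (1/2) (δ / |u|) by
    have := abs_pos.2 hu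
    positivity)
  have hr1 : r < 1/2 := hr.trans_le (min_le_left _ _)
  have hr2 : r < δ / |u| := hr.trans_le (min_le_right _ _)
  have h2 := h.mono x (s := r) (t := 1/2) hu hr0 hr1
  rw [← hc] at h2
  have h3 := H x (r * u) (by
    rw [abs_mul, abs_of_pos hr0]; exact (lt_div_iff₀ (abs_pos.2 hu)).1 hr2)
  have hrp := Real.rpow_pos_of_pos hr0 p
  rw [abs_mul r, abs_of_pos hr0, Real.mul_rpow hr0.le (abs_nonneg u)] at h3
  have h4 : -c / |u| ^ p * (r ^ p * |u| ^ p) = -c * r ^ p := by field_simp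
  rw [h4] at h3
  rw [div_lt_iff₀ hrp] at h2
  have := neg_abs_le (f x (r * u) * (r * u))
  linarith

theorem GoodF.nonneg (h : GoodF N p f) (x : Vtx N) (u : ℝ) : 0 ≤ f x u * u := by
  rcases eq_or_ne u 0 with rfl | hu
  · simp
  · exact (h.pos x hu).le

theorem GoodF.prim (h : GoodF N p f) (x : Vtx N) (a : ℝ) {s t : ℝ} (hs : 0 < s) (ht : 0 ≤ t) :
    Fprim f x (s * a) - (f x (s * a) * (s * a) / s ^ p) * (s ^ p / p) ≤
    Fprim f x (t * a) - (f x (s * a) * (s * a) / s ^ p) * (t ^ p / p) := by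
  rcases eq_or_ne a 0 with rfl | ha
  · simp [Fprim]
  have hp0 : 0 < p := by linarith [h.hp]
  set c := f x (s * a) * (s * a) / s ^ p with hc
  let G : ℝ → ℝ := fun τ => Fprim f x (τ * a) - c * (τ ^ p / p)
  have hF : ∀ u, HasDerivAt (Fprim f x) (f x u) u := fun u =>
    (h.hfc x).integral_hasStrictDerivAt 0 u |>.hasDerivAt
  have hG : ∀ τ, 0 < τ → HasDerivAt G
      ((f x (τ * a) * (τ * a) / τ ^ p - c) * τ ^ (p - 1)) τ := by
    intro τ hτ
    have h1 : HasDerivAt (fun τ : ℝ => Fprim f x (τ * a)) (f x (τ * a) * (1 * a)) τ :=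
      HasDerivAt.comp (h₂ := Fprim f x) (h := fun τ : ℝ => τ * a) τ (hF (τ * a))
        ((hasDerivAt_id τ).mul_const a)
    have h2 : HasDerivAt (fun τ : ℝ => c * (τ ^ p / p)) (c * (p * τ ^ (p-1) / p)) τ :=
      ((Real.hasDerivAt_rpow_const (Or.inl hτ.ne')).div_const p).const_mul c
    have e : (f x (τ * a) * (τ * a) / τ ^ p - c) * τ ^ (p - 1) =
        f x (τ * a) * (1 * a) - c * (p * τ ^ (p-1) / p) := by
      have := Real.rpow_pos_of_pos hτ p
      rw [Real.rpow_sub_one hτ.ne']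
      field_simp
    rw [e]
    exact h1.sub h2
  have hFc : Continuous (Fprim f x) := continuous_iff_continuousAt.2 fun u => (hF u).continuousAt
  have hGc : Continuous G := by
    have : Continuous fun τ : ℝ => τ ^ p := Real.continuous_rpow_const hp0.le
    fun_prop
  change G s ≤ G t
  rcases le_total t s with hts | hst
  · have : AntitoneOn G (Set.Icc 0 s) := by
      apply antitoneOn_of_deriv_nonpos (convex_Icc _ _) hGc.continuousOn
      · rw [interior_Icc]
        exact fun τ hτ => (hG τ hτ.1).differentiableAt.differentiableWithinAt
      · rw [interior_Icc]
        intro τ hτ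
        rw [(hG τ hτ.1).deriv]
        apply mul_nonpos_of_nonpos_of_nonneg
        · linarith [h.mono x ha hτ.1 hτ.2]
        · exact Real.rpow_nonneg hτ.1.le _
    exact this ⟨ht, hts⟩ ⟨hs.le, le_rfl⟩ hts
  · have : MonotoneOn G (Set.Ici s) := by
      apply monotoneOn_of_deriv_nonneg (convex_Ici _) hGc.continuousOn
      · rw [interior_Ici]
        exact fun τ hτ => (hG τ (hs.trans hτ)).differentiableAt.differentiableWithinAt
      · rw [interior_Ici]
        intro τ hτ
        rw [(hG τ (hs.trans hτ)).deriv]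
        apply mul_nonneg
        · linarith [h.mono x ha hs hτ]
        · exact Real.rpow_nonneg (hs.trans hτ).le _
    exact this (Set.mem_Ici.2 le_rfl) hst hst

theorem GoodF.prim_le (h : GoodF N p f) (x : Vtx N) (u : ℝ) :
    p * Fprim f x u ≤ f x u * u := by
  have hp0 : 0 < p := by linarith [h.hp]
  have := h.prim x u (s := 1) (t := 0) one_pos le_rfl
  simp only [one_mul, Real.one_rpow, div_one, zero_mul, Real.zero_rpow hp0.ne', zero_div,
    mul_zero, sub_zero] at this
  have h0 : Fprim f x 0 = 0 := by simp [Fprim]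
  rw [h0] at this
  have h2 : Fprim f x u ≤ f x u * u * (1 / p) := by linarith
  calc p * Fprim f x u ≤ p * (f x u * u * (1/p)) := by gcongr
    _ = _ := by field_simp

theorem GoodF.prim_nonneg (h : GoodF N p f) (x : Vtx N) (u : ℝ) : 0 ≤ Fprim f x u := by
  unfold Fprim
  rcases le_total 0 u with hu | hu
  · apply intervalIntegral.integral_nonneg hu
    intro t ht
    rcases eq_or_ne t 0 with rfl | h0
    · obtain ⟨δ, hδ, H⟩ := h.hA3 1 one_pos
      have := H x 0 (by simpa using hδ)
      rw [abs_zero, Real.zero_rpow (by linarith [h.hp]), mul_zero] at this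
      rw [abs_nonpos_iff.1 this]
    · have h1 := h.pos x h0
      have : 0 < t := lt_of_le_of_ne ht.1 h0.symm
      exact (pos_of_mul_pos_left h1 this.le).le
  · rw [intervalIntegral.integral_symm, ← intervalIntegral.integral_neg]
    apply intervalIntegral.integral_nonneg hu
    intro t ht
    rcases eq_or_ne t 0 with rfl | h0
    · obtain ⟨δ, hδ, H⟩ := h.hA3 1 one_pos
      have := H x 0 (by simpa using hδ)
      rw [abs_zero, Real.zero_rpow (by linarith [h.hp]), mul_zero] at this
      rw [abs_nonpos_iff.1 this]; simp
    · have h1 := h.pos x h0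
      have : t < 0 := lt_of_le_of_ne ht.2 h0
      nlinarith

theorem GoodF.toReal (h : GoodF N p f) : (ENNReal.ofReal p).toReal = p :=
  ENNReal.toReal_ofReal (by linarith [h.hp])

theorem GoodF.hasSum (h : GoodF N p f) [Fact (1 ≤ ENNReal.ofReal p)] (u : Elp N p) :
    HasSum (fun x => |u x| ^ p) (‖u‖ ^ p) := by
  have := lp.hasSum_norm (p := ENNReal.ofReal p) (by rw [h.toReal]; linarith [h.hp]) u
  rw [h.toReal] at this
  simpa using this

theorem GoodF.memE (h : GoodF N p f) [Fact (1 ≤ ENNReal.ofReal p)] (u : Elp N p) :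
    memE N p u := (h.hasSum u).summable

theorem cont_apply [Fact (1 ≤ ENNReal.ofReal p)] (x : Vtx N) :
    Continuous fun u : Elp N p => u x :=
  (lp.evalCLM ℝ (fun _ : Vtx N => ℝ) (ENNReal.ofReal p) x).continuous

theorem GoodF.summ (h : GoodF N p f) [Fact (1 ≤ ENNReal.ofReal p)] (u : Elp N p) :
    Summable fun x => f x (u x) * u x := by
  have hp0 : 0 < p := by linarith [h.hp]
  obtain ⟨δ, hδ, H⟩ := h.small 1 one_pos
  apply Summable.of_norm_bounded_eventually (h.hasSum u).summable
  have := (h.hasSum u).summable.tendsto_cofinite_zero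
  filter_upwards [this.eventually_lt_const (Real.rpow_pos_of_pos hδ p)] with x hx
  have := H x (u x) ((Real.rpow_lt_rpow_iff (abs_nonneg _) hδ.le hp0).1 hx)
  simpa using this

theorem GoodF.summF (h : GoodF N p f) [Fact (1 ≤ ENNReal.ofReal p)] (u : Elp N p) :
    Summable fun x => Fprim f x (u x) := by
  have hp0 : 0 < p := by linarith [h.hp]
  refine Summable.of_nonneg_of_le (fun x => h.prim_nonneg x _) (fun x => ?_)
    ((h.summ u).mul_left (1 / p))
  have := h.prim_le x (u x)
  rw [one_div, ← div_eq_inv_mul, le_div_iff₀ hp0]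
  linarith

def BB (f : Vtx N → ℝ → ℝ) (u : Elp N p) : ℝ := ∑' x, f x (u x) * u x

theorem GoodF.contB (h : GoodF N p f) [Fact (1 ≤ ENNReal.ofReal p)] :
    Continuous (BB f : Elp N p → ℝ) := by
  have hp0 : 0 < p := by linarith [h.hp]
  obtain ⟨δ, hδ, H⟩ := h.small 1 one_pos
  have hδp := Real.rpow_pos_of_pos hδ p
  rw [continuous_iff_continuousAt]
  intro u
  apply continuousAt_of_locally_uniform_approx_of_continuousAt
  intro W hW
  obtain ⟨ε, hε, hεW⟩ := Metric.mem_uniformity_dist.1 hW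
  have hmin : 0 < min ε (δ ^ p) := lt_min hε hδp
  obtain ⟨K, hK⟩ : ∃ K : Finset (Vtx N), ‖u‖ ^ p - min ε (δ ^ p) < ∑ x ∈ K, |u x| ^ p :=
    ((h.hasSum u).eventually_const_lt (by linarith)).exists
  have hcT : Continuous fun v : Elp N p => ‖v‖ ^ p - ∑ x ∈ K, |v x| ^ p := by
    refine (continuous_norm.rpow_const (fun _ => Or.inr hp0.le)).sub
      (continuous_finsetSum _ fun x _ => ?_)
    exact (cont_apply x).abs.rpow_const (fun _ => Or.inr hp0.le)
  have hev : ∀ᶠ v : Elp N p in 𝓝 u, ‖v‖ ^ p - ∑ x ∈ K, |v x| ^ p < min ε (δ ^ p) :=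
    hcT.continuousAt.eventually_lt_const (by linarith)
  refine ⟨_, hev, fun v => ∑ x ∈ K, f x (v x) * v x, ?_, fun v hv => hεW ?_⟩
  · refine (continuous_finsetSum _ fun x _ => ?_).continuousAt
    exact ((h.hfc x).comp (cont_apply x)).mul (cont_apply x)
  · have hv' : ‖v‖ ^ p - ∑ x ∈ K, |v x| ^ p < min ε (δ ^ p) := hv
    have hs := (h.hasSum v).summable
    have e1 := hs.sum_add_tsum_subtype_compl K
    rw [(h.hasSum v).tsum_eq] at e1
    have e2 := (h.summ v).sum_add_tsum_subtype_compl K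
    have hpt : ∀ y : {x // x ∉ K}, f y (v y) * v y ≤ |v y| ^ p := by
      intro y
      have hy : |v y| ^ p ≤ ∑' z : {x // x ∉ K}, |v z| ^ p :=
        (hs.subtype {x | x ∉ K}).le_tsum y (fun z _ => Real.rpow_nonneg (abs_nonneg _) _)
      have hlt : |v y| ^ p < δ ^ p := by
        have := min_le_right ε (δ ^ p)
        linarith
      have := H y (v y) ((Real.rpow_lt_rpow_iff (abs_nonneg _) hδ.le hp0).1 hlt)
      linarith [le_abs_self (f y (v y) * v y)]
    have hle : ∑' y : {x // x ∉ K}, f y (v y) * v y ≤ ∑' y : {x // x ∉ K}, |v y| ^ p :=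
      Summable.tsum_le_tsum hpt ((h.summ v).subtype {x | x ∉ K}) (hs.subtype {x | x ∉ K})
    have h0 : 0 ≤ ∑' y : {x // x ∉ K}, f y (v y) * v y :=
      tsum_nonneg fun y => h.nonneg _ _
    have := min_le_left ε (δ ^ p)
    rw [Real.dist_eq, BB, abs_lt]
    constructor <;> linarith

def gg (f : Vtx N → ℝ → ℝ) (w : Elp N p) (s : ℝ) : ℝ := BB f (s • w) / s ^ p

theorem gg_eq (w : Elp N p) (s : ℝ) [Fact (1 ≤ ENNReal.ofReal p)] :
    gg f w s = ∑' x, f x (s * w x) * (s * w x) / s ^ p := by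
  rw [gg, BB, tsum_div_const]; rfl

theorem GoodF.summg (h : GoodF N p f) [Fact (1 ≤ ENNReal.ofReal p)] (w : Elp N p) (s : ℝ) :
    Summable fun x => f x (s * w x) * (s * w x) / s ^ p :=
  (h.summ (s • w)).div_const (s ^ p)

theorem Elp_exists_ne {w : Elp N p} (hw : w ≠ 0) : ∃ x, w x ≠ 0 := by
  by_contra! hh
  exact hw (lp.ext (funext hh))

theorem GoodF.gmono (h : GoodF N p f) [Fact (1 ≤ ENNReal.ofReal p)] {w : Elp N p} (hw : w ≠ 0) :
    StrictMonoOn (gg f w) (Set.Ioi 0) := by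
  intro s hs t ht hst
  obtain ⟨x, hx⟩ := Elp_exists_ne hw
  rw [gg_eq, gg_eq]
  refine Summable.tsum_lt_tsum (i := x) (fun y => ?_) (h.mono x hx hs hst)
    (h.summg w s) (h.summg w t)
  rcases eq_or_ne (w y) 0 with h0 | h0
  · simp [h0]
  · exact (h.mono y h0 hs hst).le

theorem GoodF.gcontw (h : GoodF N p f) [Fact (1 ≤ ENNReal.ofReal p)] (s : ℝ) :
    Continuous fun w : Elp N p => gg f w s :=
  (h.contB.comp (continuous_const_smul s)).div_const _

theorem GoodF.gconts (h : GoodF N p f) [Fact (1 ≤ ENNReal.ofReal p)] (w : Elp N p) :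
    ContinuousOn (gg f w) (Set.Ioi 0) := by
  have hp0 : 0 < p := by linarith [h.hp]
  apply ContinuousOn.div
  · exact (h.contB.comp (continuous_id.smul continuous_const)).continuousOn
  · exact (Real.continuous_rpow_const hp0.le).continuousOn
  · intro s hs
    exact (Real.rpow_pos_of_pos hs p).ne'

theorem GoodF.gsmall (h : GoodF N p f) [Fact (1 ≤ ENNReal.ofReal p)] {w : Elp N p} (hw : w ≠ 0)
    {c : ℝ} (hc : 0 < c) : ∃ s, 0 < s ∧ gg f w s ≤ c := by
  have hp0 : 0 < p := by linarith [h.hp]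
  have hn : 0 < ‖w‖ := norm_pos_iff.2 hw
  have hnp := Real.rpow_pos_of_pos hn p
  obtain ⟨δ, hδ, H⟩ := h.small (c / ‖w‖ ^ p) (by positivity)
  refine ⟨δ / (2 * ‖w‖), by positivity, ?_⟩
  set s := δ / (2 * ‖w‖) with hs
  have hs0 : 0 < s := by positivity
  have hsp := Real.rpow_pos_of_pos hs0 p
  have hle : gg f w s ≤ ∑' x, c / ‖w‖ ^ p * |w x| ^ p := by
    rw [gg_eq]
    refine Summable.tsum_le_tsum (fun x => ?_) (h.summg w s) ((h.hasSum w).summable.mul_left _)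
    have hx : |w x| ≤ ‖w‖ := by
      simpa using lp.norm_apply_le_norm (by simpa using hp0) w x
    have h1 := H x (s * w x) (by
      rw [abs_mul, abs_of_pos hs0]
      calc s * |w x| ≤ s * ‖w‖ := by gcongr
        _ = δ / 2 := by rw [hs]; field_simp
        _ < δ := by linarith)
    rw [abs_mul s, abs_of_pos hs0, Real.mul_rpow hs0.le (abs_nonneg _)] at h1
    rw [div_le_iff₀ hsp]
    linarith [le_abs_self (f x (s * w x) * (s * w x))]
  rw [tsum_mul_left, (h.hasSum w).tsum_eq] at hle
  rwa [div_mul_cancel₀ _ hnp.ne'] at hle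

theorem GoodF.gbig (h : GoodF N p f) [Fact (1 ≤ ENNReal.ofReal p)] {w : Elp N p} (hw : w ≠ 0)
    (c : ℝ) : ∃ s, 0 < s ∧ c ≤ gg f w s := by
  have hp0 : 0 < p := by linarith [h.hp]
  obtain ⟨x, hx⟩ := Elp_exists_ne hw
  have hxp : 0 < |w x| := abs_pos.2 hx
  have hxpp := Real.rpow_pos_of_pos hxp p
  obtain ⟨R, hR, H⟩ := h.hA5 (c / (p * |w x| ^ p))
  refine ⟨R / |w x|, by positivity, ?_⟩
  set s := R / |w x| with hs
  have hs0 : 0 < s := by positivity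
  have hsp := Real.rpow_pos_of_pos hs0 p
  have hsw : |s * w x| = R := by rw [abs_mul, abs_of_pos hs0, hs]; field_simp
  have h1 := H x (s * w x) hsw.ge
  have h2 : f x (s * w x) * (s * w x) / s ^ p ≤ gg f w s := by
    rw [gg_eq]
    exact (h.summg w s).le_tsum x fun y _ => div_nonneg (h.nonneg _ _) hsp.le
  refine le_trans ?_ h2
  have h3 := h.prim_le x (s * w x)
  rw [abs_mul s, abs_of_pos hs0, Real.mul_rpow hs0.le (abs_nonneg _),
    div_le_div_iff₀ (by positivity) (by positivity)] at h1
  rw [le_div_iff₀ hsp]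
  have h4 : c * s ^ p * |w x| ^ p ≤ (p * Fprim f x (s * w x)) * |w x| ^ p := by linarith
  linarith [le_of_mul_le_mul_right h4 hxpp]

theorem GoodF.gsol (h : GoodF N p f) [Fact (1 ≤ ENNReal.ofReal p)] {w : Elp N p} (hw : w ≠ 0)
    {c : ℝ} (hc : 0 < c) : ∃ s, 0 < s ∧ gg f w s = c := by
  obtain ⟨s, hs, h1⟩ := h.gsmall hw hc
  obtain ⟨t, ht, h2⟩ := h.gbig hw c
  obtain ⟨r, hr, e⟩ := isPreconnected_Ioi.intermediate_value (Set.mem_Ioi.2 hs)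
    (Set.mem_Ioi.2 ht) (h.gconts w) ⟨h1, h2⟩
  exact ⟨r, hr, e⟩

theorem GoodF.bpos (h : GoodF N p f) [Fact (1 ≤ ENNReal.ofReal p)] {w : Elp N p} (hw : w ≠ 0) :
    0 < BB f w := by
  obtain ⟨x, hx⟩ := Elp_exists_ne hw
  exact (h.summ w).tsum_pos (fun y => h.nonneg _ _) x (h.pos x hx)

theorem gradPair_self (hp : 1 < p) (u : Vtx N → ℝ) : gradPair N p u u = pEnergy N p u := by
  unfold gradPair pEnergy
  congr 2
  ext z
  split_ifs
  · rw [abs_sub_comm (u z.1)]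
    generalize u z.2 - u z.1 = a
    rcases eq_or_ne a 0 with rfl | ha
    · rw [mul_zero, abs_zero, Real.zero_rpow (by linarith)]
    · have := abs_pos.2 ha
      rw [mul_assoc, ← abs_mul_abs_self, ← mul_assoc, ← Real.rpow_add_one this.ne',
        ← Real.rpow_add_one this.ne']
      congr 1; ring
  · rfl

theorem phiDeriv_self (hp : 1 < p) (V : Vtx N → ℝ) (u : Elp N p) :
    PhiDeriv N p V f u u = eNormP N p V u - BB f u := by
  unfold PhiDeriv eNormP BB
  rw [gradPair_self hp]
  congr 3
  ext x
  generalize u x = a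
  rcases eq_or_ne a 0 with rfl | ha
  · rw [mul_zero, abs_zero, Real.zero_rpow (by linarith), mul_zero]
  · have := abs_pos.2 ha
    rw [mul_assoc, mul_assoc, ← abs_mul_abs_self, ← mul_assoc (|a| ^ (p-2)),
      ← Real.rpow_add_one this.ne', ← Real.rpow_add_one this.ne']
    congr 2; ring

theorem eNormP_smul (V : Vtx N → ℝ) (u : Vtx N → ℝ) {s : ℝ} (hs : 0 < s) :
    eNormP N p V (s • u) = s ^ p * eNormP N p V u := by
  have key : ∀ a : ℝ, |s * a| ^ p = s ^ p * |a| ^ p := fun a => by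
    rw [abs_mul, abs_of_pos hs, Real.mul_rpow hs.le (abs_nonneg _)]
  unfold eNormP pEnergy
  simp only [Pi.smul_apply, smul_eq_mul, ← mul_sub, key]
  have e1 : (∑' z : Vtx N × Vtx N, if LatAdj z.1 z.2 then s ^ p * |u z.1 - u z.2| ^ p else 0) =
      s ^ p * ∑' z : Vtx N × Vtx N, if LatAdj z.1 z.2 then |u z.1 - u z.2| ^ p else 0 := by
    rw [← tsum_mul_left]
    refine tsum_congr fun z => ?_
    split_ifs <;> simp
  have e2 : (∑' x, V x * (s ^ p * |u x| ^ p)) = s ^ p * ∑' x, V x * |u x| ^ p := by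
    rw [← tsum_mul_left]
    refine tsum_congr fun x => ?_
    ring
  rw [e1, e2]
  ring

theorem eNormP_nonneg {V : Vtx N → ℝ} (hV : ∀ x, 0 < V x) (u : Vtx N → ℝ) :
    0 ≤ eNormP N p V u := by
  unfold eNormP pEnergy
  refine add_nonneg (mul_nonneg (by norm_num) (tsum_nonneg fun z => ?_)) (tsum_nonneg fun x => ?_)
  · split_ifs <;> positivity
  · exact mul_nonneg (hV x).le (by positivity)

theorem eNorm_smul (hp : 1 < p) {V : Vtx N → ℝ} (hV : ∀ x, 0 < V x) (u : Vtx N → ℝ) {s : ℝ}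
    (hs : 0 < s) : eNorm N p V (s • u) = s * eNorm N p V u := by
  have hp0 : 0 < p := by linarith
  unfold eNorm
  rw [eNormP_smul V u hs, Real.mul_rpow (by positivity) (eNormP_nonneg hV u),
    ← Real.rpow_mul hs.le, mul_one_div_cancel hp0.ne', Real.rpow_one]

theorem eNormP_of_eNorm (hp : 1 < p) {V : Vtx N → ℝ} (hV : ∀ x, 0 < V x) (u : Vtx N → ℝ) :
    eNormP N p V u = eNorm N p V u ^ p := by
  have hp0 : 0 < p := by linarith
  unfold eNorm
  rw [← Real.rpow_mul (eNormP_nonneg hV u), one_div_mul_cancel hp0.ne', Real.rpow_one]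

theorem GoodF.nehari_iff (h : GoodF N p f) [Fact (1 ≤ ENNReal.ofReal p)] (V : Vtx N → ℝ)
    (u : Elp N p) : ⇑u ∈ Nehari N p V f ↔ u ≠ 0 ∧ eNormP N p V u = BB f u := by
  unfold Nehari
  rw [Set.mem_ofPred_eq, phiDeriv_self h.hp, sub_eq_zero]
  have : (⇑u ≠ 0) ↔ u ≠ 0 := by
    rw [not_iff_not]
    constructor
    · intro e; exact lp.ext (by rw [e]; rfl)
    · rintro rfl; rfl
  rw [this]
  exact ⟨fun H => H.2, fun H => ⟨h.memE u, H⟩⟩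

theorem GoodF.nehari_smul_iff (h : GoodF N p f) [Fact (1 ≤ ENNReal.ofReal p)] (V : Vtx N → ℝ)
    {w : Elp N p} (hw : w ≠ 0) {s : ℝ} (hs : 0 < s) :
    ⇑(s • w) ∈ Nehari N p V f ↔ gg f w s = eNormP N p V w := by
  rw [h.nehari_iff, lp.coeFn_smul, eNormP_smul V _ hs, gg,
    div_eq_iff (Real.rpow_pos_of_pos hs p).ne']
  constructor
  · rintro ⟨-, e⟩; rw [← e]; ring
  · intro e; exact ⟨smul_ne_zero hs.ne' hw, by rw [e]; ring⟩

theorem GoodF.maxPhi (h : GoodF N p f) [Fact (1 ≤ ENNReal.ofReal p)] (V : Vtx N → ℝ)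
    (w : Elp N p) {s t : ℝ} (hs : 0 < s) (ht : 0 < t)
    (e : gg f w s = eNormP N p V w) :
    PhiFun N p V f (t • ⇑w) ≤ PhiFun N p V f (s • ⇑w) := by
  unfold PhiFun
  rw [eNormP_smul V _ hs, eNormP_smul V _ ht]
  have S1 : Summable fun x => Fprim f x (s * w x) := h.summF (s • w)
  have S2 : Summable fun x => Fprim f x (t * w x) := h.summF (t • w)
  have Sg := h.summg w s
  have := Summable.tsum_le_tsum (fun x => h.prim x (w x) hs ht.le)
    (S1.sub (Sg.mul_right (s ^ p / p))) (S2.sub (Sg.mul_right (t ^ p / p)))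
  rw [S1.tsum_sub (Sg.mul_right _), S2.tsum_sub (Sg.mul_right _), tsum_mul_right, tsum_mul_right,
    ← gg_eq, e] at this
  simp only [Pi.smul_apply, smul_eq_mul]
  have e1 : 1 / p * (s ^ p * eNormP N p V w) = eNormP N p V w * (s ^ p / p) := by ring
  have e2 : 1 / p * (t ^ p * eNormP N p V w) = eNormP N p V w * (t ^ p / p) := by ring
  rw [e1, e2]
  linarith

end helpers

/-- the map w ↦ s_w • w is a homeomorphism from the unit sphere of E
onto the Nehari manifold, with inverse u ↦ u / ‖u‖. -/
theorem stmt_12 (N : ℕ) (p q : ℝ) (hp : 1 < p) (hq : p < q)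
    (V : Vtx N → ℝ) (f : Vtx N → ℝ → ℝ) (T : ℕ) (hT : 0 < T)
    (hA1 : ∃ a : ℝ, 0 < a ∧ ∀ x u, |f x u| ≤ a * (1 + |u| ^ (q - 1)))
    (hfc : ∀ x, Continuous (f x))
    (hA2V : ∀ x (i : Fin N), V (x + (T : ℤ) • Pi.single i 1) = V x)
    (hA2f : ∀ x (i : Fin N) (u : ℝ), f (x + (T : ℤ) • Pi.single i 1) u = f x u)
    (hVpos : ∀ x, 0 < V x)
    (hA3 : ∀ ε > (0:ℝ), ∃ δ > (0:ℝ), ∀ x u, |u| < δ → |f x u| ≤ ε * |u| ^ (p - 1))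
    (hA4 : ∀ x, StrictMonoOn (fun u => f x u / |u| ^ (p - 1)) (Set.Iio 0) ∧
               StrictMonoOn (fun u => f x u / |u| ^ (p - 1)) (Set.Ioi 0))
    (hA5 : ∀ M : ℝ, ∃ R > (0:ℝ), ∀ x u, R ≤ |u| → M ≤ Fprim f x u / |u| ^ p)
    [Fact (1 ≤ ENNReal.ofReal p)] :
    ∃ m : {w : Elp N p // eNorm N p V ⇑w = 1} ≃ₜ
          {u : Elp N p // ⇑u ∈ Nehari N p V f},
      (∀ w : {w : Elp N p // eNorm N p V ⇑w = 1},
        ∃ s : ℝ, 0 < s ∧ (⇑(m w : Elp N p) = s • ⇑(w : Elp N p)) ∧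
          ∀ t : ℝ, 0 < t →
            PhiFun N p V f (t • ⇑(w : Elp N p)) ≤ PhiFun N p V f ⇑(m w : Elp N p)) ∧
      (∀ u : {u : Elp N p // ⇑u ∈ Nehari N p V f},
        ⇑(m.symm u : Elp N p) = (eNorm N p V ⇑(u : Elp N p))⁻¹ • ⇑(u : Elp N p)) := by
  have h : GoodF N p f := ⟨hp, hfc, hA3, hA4, hA5⟩
  have hp0 : 0 < p := by linarith
  have hSne : ∀ w : {w : Elp N p // eNorm N p V ⇑w = 1}, (w : Elp N p) ≠ 0 := by
    rintro ⟨w, hw⟩ rfl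
    have : eNormP N p V ⇑(0 : Elp N p) = 0 := by
      simp [eNormP, pEnergy, Real.zero_rpow hp0.ne']
    rw [eNorm, this, Real.zero_rpow (by positivity)] at hw
    exact zero_ne_one hw
  have hSP : ∀ w : {w : Elp N p // eNorm N p V ⇑w = 1}, eNormP N p V ⇑(w : Elp N p) = 1 := by
    intro w
    rw [eNormP_of_eNorm hp hVpos, w.2, Real.one_rpow]
  choose σ hσ0 hσ using fun w : {w : Elp N p // eNorm N p V ⇑w = 1} => h.gsol (hSne w) one_pos
  have hNpos : ∀ u : {u : Elp N p // ⇑u ∈ Nehari N p V f}, 0 < eNorm N p V ⇑(u : Elp N p) := by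
    intro u
    have := (h.nehari_iff V _).1 u.2
    rw [eNorm, this.2]
    exact Real.rpow_pos_of_pos (h.bpos this.1) _
  have hσN : ∀ w : {w : Elp N p // eNorm N p V ⇑w = 1},
      ⇑(σ w • (w : Elp N p)) ∈ Nehari N p V f := fun w => by
    rw [h.nehari_smul_iff V (hSne w) (hσ0 w), hσ, hSP]
  have hS : ∀ u : {u : Elp N p // ⇑u ∈ Nehari N p V f},
      eNorm N p V ⇑((eNorm N p V ⇑(u : Elp N p))⁻¹ • (u : Elp N p)) = 1 := fun u => by
    rw [lp.coeFn_smul, eNorm_smul hp hVpos _ (inv_pos.2 (hNpos u)),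
      inv_mul_cancel₀ (hNpos u).ne']
  have hσc : Continuous σ := by
    rw [continuous_iff_continuousAt]
    intro w
    have hg : ∀ r : ℝ, ContinuousAt (fun v : {w : Elp N p // eNorm N p V ⇑w = 1} =>
        gg f (v : Elp N p) r) w := fun r =>
      ((h.gcontw r).comp continuous_subtype_val).continuousAt
    rw [ContinuousAt, tendsto_order]
    constructor
    · intro a ha
      rcases le_or_gt a 0 with ha0 | ha0
      · exact Eventually.of_forall fun v => ha0.trans_lt (hσ0 v)
      · have h1 := h.gmono (hSne w) (Set.mem_Ioi.2 ha0) (Set.mem_Ioi.2 (hσ0 w)) ha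
        rw [hσ] at h1
        filter_upwards [(hg a).eventually_lt_const h1] with v hv
        have hv := hv.trans_eq (hσ v).symm
        exact ((h.gmono (hSne v)).lt_iff_lt (Set.mem_Ioi.2 ha0) (Set.mem_Ioi.2 (hσ0 v))).1 hv
    · intro a ha
      have ha0 : 0 < a := (hσ0 w).trans ha
      have h1 := h.gmono (hSne w) (Set.mem_Ioi.2 (hσ0 w)) (Set.mem_Ioi.2 ha0) ha
      rw [hσ] at h1
      filter_upwards [(hg a).eventually_const_lt h1] with v hv
      have hv := (hσ v).trans_lt hv
      exact ((h.gmono (hSne v)).lt_iff_lt (Set.mem_Ioi.2 (hσ0 v)) (Set.mem_Ioi.2 ha0)).1 hv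
  have hNc : Continuous fun u : {u : Elp N p // ⇑u ∈ Nehari N p V f} =>
      eNorm N p V ⇑(u : Elp N p) := by
    have e : (fun u : {u : Elp N p // ⇑u ∈ Nehari N p V f} => eNorm N p V ⇑(u : Elp N p)) =
        fun u : {u : Elp N p // ⇑u ∈ Nehari N p V f} =>
          (BB f (u : Elp N p)) ^ (1 / p) := by
      ext u
      rw [eNorm, ((h.nehari_iff V _).1 u.2).2]
    rw [e]
    exact (h.contB.comp continuous_subtype_val).rpow_const fun _ => Or.inr (by positivity)
  let m : {w : Elp N p // eNorm N p V ⇑w = 1} ≃ₜ {u : Elp N p // ⇑u ∈ Nehari N p V f} :=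
    { toFun := fun w => ⟨σ w • (w : Elp N p), hσN w⟩
      invFun := fun u => ⟨(eNorm N p V ⇑(u : Elp N p))⁻¹ • (u : Elp N p), hS u⟩
      left_inv := by
        intro w
        apply Subtype.ext
        change (eNorm N p V ⇑(σ w • (w : Elp N p)))⁻¹ • (σ w • (w : Elp N p)) = w
        rw [lp.coeFn_smul, eNorm_smul hp hVpos _ (hσ0 w), w.2, mul_one, smul_smul,
          inv_mul_cancel₀ (hσ0 w).ne', one_smul]
      right_inv := by
        intro u
        apply Subtype.ext
        set w : {w : Elp N p // eNorm N p V ⇑w = 1} :=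
          ⟨(eNorm N p V ⇑(u : Elp N p))⁻¹ • (u : Elp N p), hS u⟩ with hw
        change σ w • (w : Elp N p) = u
        have hu : eNorm N p V ⇑(u : Elp N p) • (w : Elp N p) = u := by
          rw [hw]
          change eNorm N p V ⇑(u : Elp N p) • ((eNorm N p V ⇑(u : Elp N p))⁻¹ • (u : Elp N p)) = u
          rw [smul_smul, mul_inv_cancel₀ (hNpos u).ne', one_smul]
        have hr := hNpos u
        generalize eNorm N p V ⇑(u : Elp N p) = r at hu hr
        have h1 : ⇑(r • (w : Elp N p)) ∈ Nehari N p V f := by rw [hu]; exact u.2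
        have h3 : gg f (w : Elp N p) r = gg f (w : Elp N p) (σ w) :=
          (((h.nehari_smul_iff V (hSne w) hr).1 h1).trans (hSP w)).trans (hσ w).symm
        have h2 := (h.gmono (hSne w)).injOn (Set.mem_Ioi.2 hr) (Set.mem_Ioi.2 (hσ0 w)) h3
        rw [← h2, hu]
      continuous_toFun := (hσc.smul continuous_subtype_val).subtype_mk _
      continuous_invFun :=
        ((hNc.inv₀ fun u => (hNpos u).ne').smul continuous_subtype_val).subtype_mk _ }
  refine ⟨m, fun w => ⟨σ w, hσ0 w, rfl, fun t ht => ?_⟩, fun u => rfl⟩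
  exact h.maxPhi V (w : Elp N p) (hσ0 w) ht (by rw [hσ, hSP])
end
end

section
/- Main theorem: Let p ∈ (1,∞) and consider −Δ_p u + V(x)|u|^{p−2}u = f(x,u) on ℤ^N, where V and f satisfy (A₁)–(A₅). Then the Nehari level c = inf_{𝒩} Φ is positive and attained, and any u ∈ 𝒩 with Φ(u) = c is a ground state solution: u is a nontrivial pointwise solution of the equation with least energy among all nontrivial solutions. -/
open scoped BigOperators
open Filter Topology

noncomputable section

structure Hyp {N : ℕ} (p : ℝ) (V : Vtx N → ℝ) (f : Vtx N → ℝ → ℝ) (T : ℕ) : Prop where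
  hp : 1 < p
  hT : 0 < T
  hfc : ∀ x, Continuous (f x)
  hA2V : ∀ x (i : Fin N), V (x + (T : ℤ) • Pi.single i 1) = V x
  hA2f : ∀ x (i : Fin N) (u : ℝ), f (x + (T : ℤ) • Pi.single i 1) u = f x u
  hVpos : ∀ x, 0 < V x
  hA3 : ∀ ε > (0:ℝ), ∃ δ > (0:ℝ), ∀ x u, |u| < δ → |f x u| ≤ ε * |u| ^ (p - 1)
  hA4 : ∀ x, StrictMonoOn (fun u => f x u / |u| ^ (p - 1)) (Set.Iio 0) ∧
               StrictMonoOn (fun u => f x u / |u| ^ (p - 1)) (Set.Ioi 0)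
  hA5 : ∀ M : ℝ, ∃ R > (0:ℝ), ∀ x u, R ≤ |u| → M ≤ Fprim f x u / |u| ^ p

def kk {N : ℕ} (f : Vtx N → ℝ → ℝ) (x : Vtx N) (t : ℝ) : ℝ := f x t * t

def hh {N : ℕ} (p : ℝ) (f : Vtx N → ℝ → ℝ) (x : Vtx N) (t : ℝ) : ℝ :=
  kk f x t / p - Fprim f x t

theorem kk_zero {N : ℕ} (f : Vtx N → ℝ → ℝ) (x : Vtx N) : kk f x 0 = 0 := by simp [kk]

theorem Fprim_zero {N : ℕ} (f : Vtx N → ℝ → ℝ) (x : Vtx N) : Fprim f x 0 = 0 := by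
  simp [Fprim]

theorem hh_zero {N : ℕ} (p : ℝ) (f : Vtx N → ℝ → ℝ) (x : Vtx N) : hh p f x 0 = 0 := by
  simp [hh, kk_zero, Fprim_zero]

namespace Hyp
variable {N : ℕ} {p : ℝ} {V : Vtx N → ℝ} {f : Vtx N → ℝ → ℝ} {T : ℕ}

theorem kmono_strict (h : Hyp p V f T) (x : Vtx N) {a : ℝ} (ha : a ≠ 0) {s t : ℝ}
    (hs : 0 < s) (hst : s < t) : kk f x (s * a) * t ^ p < kk f x (t * a) * s ^ p := by
  have ht : 0 < t := hs.trans hst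
  have hA : 0 < |a| ^ (p - 1) := Real.rpow_pos_of_pos (abs_pos.2 ha) _
  have hs1 : 0 < s ^ (p - 1) := Real.rpow_pos_of_pos hs _
  have ht1 : 0 < t ^ (p - 1) := Real.rpow_pos_of_pos ht _
  have es : |s * a| ^ (p - 1) = s ^ (p - 1) * |a| ^ (p - 1) := by
    rw [abs_mul, abs_of_pos hs, Real.mul_rpow hs.le (abs_nonneg _)]
  have et : |t * a| ^ (p - 1) = t ^ (p - 1) * |a| ^ (p - 1) := by
    rw [abs_mul, abs_of_pos ht, Real.mul_rpow ht.le (abs_nonneg _)]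
  have sp : s ^ p = s ^ (p - 1) * s := by
    rw [← Real.rpow_add_one hs.ne']; ring_nf
  have tp : t ^ p = t ^ (p - 1) * t := by
    rw [← Real.rpow_add_one ht.ne']; ring_nf
  rw [sp, tp]; unfold kk
  rcases lt_or_gt_of_ne ha with hn | hpos
  · have := (h.hA4 x).1 (show t * a ∈ Set.Iio 0 from mul_neg_of_pos_of_neg ht hn)
      (show s * a ∈ Set.Iio 0 from mul_neg_of_pos_of_neg hs hn) (by nlinarith)
    simp only [es, et] at this
    rw [div_lt_div_iff₀ (by positivity) (by positivity)] at this
    have h2 : f x (t * a) * s ^ (p - 1) < f x (s * a) * t ^ (p - 1) := by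
      apply lt_of_mul_lt_mul_right _ hA.le
      linarith
    have h3 : 0 < s * t * (-a) := by have := neg_pos.2 hn; positivity
    nlinarith [mul_lt_mul_of_pos_right h2 h3]
  · have := (h.hA4 x).2 (show s * a ∈ Set.Ioi 0 from mul_pos hs hpos)
      (show t * a ∈ Set.Ioi 0 from mul_pos ht hpos) (by nlinarith)
    simp only [es, et] at this
    rw [div_lt_div_iff₀ (by positivity) (by positivity)] at this
    have h2 : f x (s * a) * t ^ (p - 1) < f x (t * a) * s ^ (p - 1) := by
      apply lt_of_mul_lt_mul_right _ hA.le
      linarith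
    have h3 : 0 < s * t * a := by positivity
    nlinarith [mul_lt_mul_of_pos_right h2 h3]

theorem kmono (h : Hyp p V f T) (x : Vtx N) (a : ℝ) {s t : ℝ}
    (hs : 0 < s) (hst : s ≤ t) : kk f x (s * a) * t ^ p ≤ kk f x (t * a) * s ^ p := by
  rcases eq_or_ne a 0 with rfl | ha
  · simp [kk_zero]
  rcases hst.eq_or_lt with rfl | hst
  · rfl
  exact (h.kmono_strict x ha hs hst).le

theorem p0 (h : Hyp p V f T) : 0 < p := by linarith [h.hp]

theorem ksmall (h : Hyp p V f T) (ε : ℝ) (hε : 0 < ε) :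
    ∃ δ > (0:ℝ), ∀ x u, |u| < δ → |kk f x u| ≤ ε * |u| ^ p := by
  obtain ⟨δ, hδ, H⟩ := h.hA3 ε hε
  refine ⟨δ, hδ, fun x u hu => ?_⟩
  rcases eq_or_ne u 0 with rfl | hu0
  · simp [kk_zero, Real.zero_rpow h.p0.ne']
  have e : |u| ^ p = |u| ^ (p - 1) * |u| := by
    rw [← Real.rpow_add_one (abs_pos.2 hu0).ne']; ring_nf
  rw [kk, abs_mul, e, ← mul_assoc]
  exact mul_le_mul_of_nonneg_right (H x u hu) (abs_nonneg _)

theorem kpos (h : Hyp p V f T) (x : Vtx N) {a : ℝ} (ha : a ≠ 0) : 0 < kk f x a := by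
  by_contra hc
  push Not at hc
  have h0 := h.kmono_strict x ha (s := 1/2) (t := 1) (by norm_num) (by norm_num)
  simp only [one_mul, Real.one_rpow, mul_one] at h0
  have hm : kk f x (1/2 * a) < 0 := by
    have : (0:ℝ) < (1/2) ^ p := by positivity
    nlinarith
  set m := kk f x (1/2 * a) with hmdef
  have hap : 0 < |a| ^ p := Real.rpow_pos_of_pos (abs_pos.2 ha) _
  obtain ⟨δ, hδ, H⟩ := h.ksmall (-m / (2 * |a| ^ p)) (by have := neg_pos.2 hm; positivity)
  have haa := abs_pos.2 ha
  set s := min (1/2) (δ / (2 * |a|)) with hs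
  have hs0 : 0 < s := by rw [hs]; positivity
  have h1 := h.kmono x a hs0 (t := 1/2) (min_le_left _ _)
  have h2 : s * |a| < δ := by
    have : s ≤ δ / (2 * |a|) := min_le_right _ _
    rw [le_div_iff₀ (by positivity)] at this
    nlinarith
  have h3 := H x (s * a) (by rwa [abs_mul, abs_of_pos hs0])
  rw [abs_mul s, abs_of_pos hs0, Real.mul_rpow hs0.le (abs_nonneg _)] at h3
  have e : -m / (2 * |a| ^ p) * (s ^ p * |a| ^ p) = -m / 2 * s ^ p := by
    field_simp
  rw [e] at h3
  have h4 := (abs_le.1 h3).1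
  have hsp : 0 < s ^ p := Real.rpow_pos_of_pos hs0 _
  rw [← hmdef] at h1
  have h5 : ((1:ℝ)/2) ^ p ≤ 1 := Real.rpow_le_one (by norm_num) (by norm_num) h.p0.le
  have h6 : (0:ℝ) < (1/2) ^ p := by positivity
  have h7 : kk f x (s * a) * (1/2) ^ p ≥ -(-m / 2 * s ^ p) * (1/2)^p :=
    mul_le_mul_of_nonneg_right h4 h6.le
  have h8 : 0 < (-m) * s ^ p := by have := neg_pos.2 hm; positivity
  nlinarith

theorem knn (h : Hyp p V f T) (x : Vtx N) (a : ℝ) : 0 ≤ kk f x a := by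
  rcases eq_or_ne a 0 with rfl | ha
  · simp [kk_zero]
  · exact (h.kpos x ha).le

theorem kcont (h : Hyp p V f T) (x : Vtx N) : Continuous (kk f x) := by
  unfold kk; exact (h.hfc x).mul continuous_id

theorem Fderiv (h : Hyp p V f T) (x : Vtx N) (t : ℝ) : HasDerivAt (Fprim f x) (f x t) t := by
  have := (h.hfc x).integral_hasStrictDerivAt 0 t
  exact this.hasDerivAt

theorem Fcont (h : Hyp p V f T) (x : Vtx N) : Continuous (Fprim f x) :=
  continuous_iff_continuousAt.2 fun t => (h.Fderiv x t).continuousAt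

theorem hcont (h : Hyp p V f T) (x : Vtx N) : Continuous (hh p f x) := by
  unfold hh; exact ((h.kcont x).div_const _).sub (h.Fcont x)

theorem Fderiv' (h : Hyp p V f T) (x : Vtx N) (a t : ℝ) :
    HasDerivAt (fun t => Fprim f x (t * a)) (f x (t * a) * a) t := by
  have h2 : HasDerivAt (fun y : ℝ => y * a) a t := by
    simpa using (hasDerivAt_id t).mul_const a
  exact (h.Fderiv x (t * a)).comp t h2

theorem Fnn (h : Hyp p V f T) (x : Vtx N) (a : ℝ) : 0 ≤ Fprim f x a := by
  have : MonotoneOn (fun t => Fprim f x (t * a)) (Set.Icc 0 1) := by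
    apply monotoneOn_of_deriv_nonneg (convex_Icc 0 1)
    · exact ((h.Fcont x).comp (by fun_prop)).continuousOn
    · exact fun t _ => (h.Fderiv' x a t).differentiableAt.differentiableWithinAt
    · intro t ht
      rw [interior_Icc] at ht
      rw [(h.Fderiv' x a t).deriv]
      have := h.knn x (t * a)
      unfold kk at this
      have h1 : 0 ≤ t * (f x (t * a) * a) := by linarith
      exact nonneg_of_mul_nonneg_right h1 ht.1
  have := this (a := 0) (b := 1) (by simp) (by simp) zero_le_one
  simpa [Fprim_zero] using this

theorem Fdiff (h : Hyp p V f T) (x : Vtx N) (a : ℝ) {t : ℝ} (ht : 0 < t) :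
    p * (Fprim f x a - Fprim f x (t * a)) ≤ (1 - t ^ p) * kk f x a := by
  have hp0 := h.p0
  have hd : ∀ t : ℝ, 0 < t → HasDerivAt (fun t => Fprim f x (t * a) - t ^ p / p * kk f x a)
      (f x (t * a) * a - t ^ (p - 1) * kk f x a) t := by
    intro t ht
    have h1 := (h.Fderiv' x a t).sub (((Real.hasDerivAt_rpow_const (p := p) (Or.inl ht.ne')).div_const p).mul_const (kk f x a))
    refine h1.congr_deriv ?_
    rw [mul_div_cancel_left₀ _ hp0.ne']
  have key : ∀ t : ℝ, 0 < t → t * (f x (t * a) * a - t ^ (p - 1) * kk f x a) =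
      kk f x (t * a) - t ^ p * kk f x a := by
    intro t ht
    have tp : t ^ p = t ^ (p - 1) * t := by
      rw [← Real.rpow_add_one ht.ne']; ring_nf
    rw [tp]; unfold kk; ring
  suffices Fprim f x (1 * a) - 1 ^ p / p * kk f x a ≤ Fprim f x (t * a) - t ^ p / p * kk f x a by
    rw [one_mul, Real.one_rpow] at this
    have := mul_le_mul_of_nonneg_left this hp0.le
    have e1 : p * (Fprim f x a - 1 / p * kk f x a) = p * Fprim f x a - kk f x a := by
      field_simp
    have e2 : p * (Fprim f x (t * a) - t ^ p / p * kk f x a) =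
      p * Fprim f x (t * a) - t ^ p * kk f x a := by field_simp
    rw [e1, e2] at this
    linarith
  rcases le_total t 1 with h1 | h1
  · have : AntitoneOn (fun t => Fprim f x (t * a) - t ^ p / p * kk f x a) (Set.Icc t 1) := by
      apply antitoneOn_of_deriv_nonpos (convex_Icc t 1)
      · exact fun s hs => (hd s (ht.trans_le hs.1)).continuousAt.continuousWithinAt
      · intro s hs
        rw [interior_Icc] at hs
        exact (hd s (ht.trans hs.1)).differentiableAt.differentiableWithinAt
      · intro s hs
        rw [interior_Icc] at hs
        have hs0 := ht.trans hs.1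
        rw [(hd s hs0).deriv]
        have k1 := key s hs0
        have := h.kmono x a hs0 hs.2.le
        simp only [Real.one_rpow, one_mul, mul_one] at this
        have : 0 ≤ s * -(f x (s * a) * a - s ^ (p - 1) * kk f x a) := by linarith
        linarith [nonneg_of_mul_nonneg_right this hs0]
    exact this ⟨le_rfl, h1⟩ ⟨h1, le_rfl⟩ h1
  · have : MonotoneOn (fun t => Fprim f x (t * a) - t ^ p / p * kk f x a) (Set.Icc 1 t) := by
      apply monotoneOn_of_deriv_nonneg (convex_Icc 1 t)
      · exact fun s hs => (hd s (one_pos.trans_le hs.1)).continuousAt.continuousWithinAt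
      · intro s hs
        rw [interior_Icc] at hs
        exact (hd s (one_pos.trans hs.1)).differentiableAt.differentiableWithinAt
      · intro s hs
        rw [interior_Icc] at hs
        have hs0 := one_pos.trans hs.1
        rw [(hd s hs0).deriv]
        have k1 := key s hs0
        have := h.kmono x a one_pos hs.1.le
        simp only [Real.one_rpow, one_mul, mul_one] at this
        have : 0 ≤ s * (f x (s * a) * a - s ^ (p - 1) * kk f x a) := by linarith
        exact nonneg_of_mul_nonneg_right this hs0
    exact this ⟨le_rfl, h1⟩ ⟨h1, le_rfl⟩ h1

theorem hpos (h : Hyp p V f T) (x : Vtx N) {a : ℝ} (ha : a ≠ 0) : 0 < hh p f x a := by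
  have hp0 := h.p0
  have aux : ∀ a, a ≠ 0 → p * Fprim f x a < p * Fprim f x (1/2 * a) + kk f x a - kk f x (1/2*a) := by
    intro a ha
    have h1 := h.Fdiff x a (t := 1/2) (by norm_num)
    have h0 := h.kmono_strict x ha (s := 1/2) (t := 1) (by norm_num) (by norm_num)
    simp only [one_mul, Real.one_rpow, mul_one] at h0
    nlinarith
  -- the weak inequality by passing to the limit t → 0
  have weak : ∀ a, p * Fprim f x a ≤ kk f x a := by
    intro a
    have hc : Tendsto (fun t : ℝ => p * (Fprim f x a - Fprim f x (t * a))) (𝓝[>] 0)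
        (𝓝 (p * (Fprim f x a - Fprim f x (0 * a)))) := by
      apply Tendsto.mono_left _ nhdsWithin_le_nhds
      apply Continuous.tendsto
      have := h.Fcont x
      fun_prop
    rw [zero_mul, Fprim_zero, sub_zero] at hc
    refine le_of_tendsto hc ?_
    filter_upwards [self_mem_nhdsWithin] with t ht
    have h1 := h.Fdiff x a (t := t) ht
    have : 0 ≤ t ^ p * kk f x a := mul_nonneg (Real.rpow_nonneg (le_of_lt ht) _) (h.knn x a)
    linarith
  have h1 := aux a ha
  have h2 := weak (1/2 * a)
  unfold hh
  rw [sub_pos, lt_div_iff₀ hp0]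
  linarith

theorem hnn (h : Hyp p V f T) (x : Vtx N) (a : ℝ) : 0 ≤ hh p f x a := by
  rcases eq_or_ne a 0 with rfl | ha
  · simp [hh_zero]
  · exact (h.hpos x ha).le

theorem Fle (h : Hyp p V f T) (x : Vtx N) (a : ℝ) : Fprim f x a ≤ kk f x a / p := by
  have := h.hnn x a
  unfold hh at this; linarith

theorem hle (h : Hyp p V f T) (x : Vtx N) (a : ℝ) : hh p f x a ≤ kk f x a / p := by
  have := h.Fnn x a
  unfold hh; linarith

theorem hmono (h : Hyp p V f T) (x : Vtx N) (a : ℝ) {s : ℝ} (hs : 0 < s) (hs1 : s ≤ 1) :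
    hh p f x (s * a) ≤ hh p f x a := by
  have h1 := h.Fdiff x a hs
  have h2 := h.kmono x a hs hs1
  simp only [one_mul, Real.one_rpow, mul_one] at h2
  have hp0 := h.p0
  have : p * hh p f x (s * a) ≤ p * hh p f x a := by
    have e : ∀ b, p * hh p f x b = kk f x b - p * Fprim f x b := by
      intro b; unfold hh; field_simp
    rw [e, e]; linarith
  exact le_of_mul_le_mul_left this hp0

end Hyp
section lattice
variable {N : ℕ}

theorem adj_symm {x y : Vtx N} : LatAdj x y ↔ LatAdj y x := by
  unfold LatAdj; simp only [abs_sub_comm]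

theorem adj_add {x y k : Vtx N} : LatAdj (x + k) (y + k) ↔ LatAdj x y := by
  unfold LatAdj; simp

theorem adj_zero {x y : Vtx N} : LatAdj x y ↔ LatAdj 0 (y - x) := by
  rw [← adj_add (x := 0) (k := x)]; simp

theorem adj_irrefl {x : Vtx N} : ¬ LatAdj x x := by
  unfold LatAdj; simp

theorem adj_mem {x y : Vtx N} (h : LatAdj x y) : y ∈ Finset.Icc (x - 1) (x + 1) := by
  unfold LatAdj at h
  have : ∀ i, |x i - y i| ≤ 1 := by
    intro i; rw [← h]
    exact Finset.single_le_sum (f := fun i => |x i - y i|) (fun i _ => abs_nonneg _) (Finset.mem_univ i)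
  rw [Finset.mem_Icc]
  constructor <;> intro i <;> have := abs_le.1 (this i) <;> simp <;> omega

theorem self_mem (x : Vtx N) : x ∈ Finset.Icc (x - 1) (x + 1) := by
  rw [Finset.mem_Icc]
  constructor <;> intro i <;> simp

def Cdeg (N : ℕ) : ℝ := ∑' d : Vtx N, if LatAdj 0 d then (1:ℝ) else 0

def shearE (N : ℕ) : Vtx N × Vtx N ≃ Vtx N × Vtx N where
  toFun z := (z.1, z.2 - z.1)
  invFun z := (z.1, z.2 + z.1)
  left_inv z := by simp
  right_inv z := by simp

theorem adj_sum (g : Vtx N → ℝ) (hg0 : ∀ x, 0 ≤ g x) (hg : Summable g) :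
    (Summable fun z : Vtx N × Vtx N => if LatAdj z.1 z.2 then g z.1 else 0) ∧
    (∑' z : Vtx N × Vtx N, if LatAdj z.1 z.2 then g z.1 else 0) = Cdeg N * ∑' x, g x := by
  have hd : Summable fun d : Vtx N => if LatAdj 0 d then (1:ℝ) else 0 := by
    apply summable_of_ne_finset_zero (s := Finset.Icc (0 - 1) (0 + 1))
    intro d hd
    rw [if_neg]
    exact fun h => hd (adj_mem h)
  have hs := hg.mul_of_nonneg hd hg0 (fun d => by dsimp only; split_ifs <;> norm_num)
  have e : (fun z : Vtx N × Vtx N => if LatAdj z.1 z.2 then g z.1 else 0) =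
      (fun z : Vtx N × Vtx N => g z.1 * (if LatAdj 0 z.2 then (1:ℝ) else 0)) ∘ shearE N := by
    funext z
    change _ = g z.1 * (if LatAdj 0 (z.2 - z.1) then (1:ℝ) else 0)
    by_cases hz : LatAdj z.1 z.2
    · rw [if_pos hz, if_pos (adj_zero.1 hz), mul_one]
    · rw [if_neg hz, if_neg (fun h => hz (adj_zero.2 h)), mul_zero]
  rw [e]
  constructor
  · exact (shearE N).summable_iff.2 hs
  · have := (shearE N).tsum_eq (fun z : Vtx N × Vtx N => g z.1 * (if LatAdj 0 z.2 then (1:ℝ) else 0))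
    refine this.trans ?_
    rw [mul_comm, Cdeg]
    exact (hg.tsum_mul_tsum hd hs).symm

theorem adj_summable2 (g : Vtx N → ℝ) (hg0 : ∀ x, 0 ≤ g x) (hg : Summable g) :
    (Summable fun z : Vtx N × Vtx N => if LatAdj z.1 z.2 then g z.2 else 0) ∧
    (∑' z : Vtx N × Vtx N, if LatAdj z.1 z.2 then g z.2 else 0) = Cdeg N * ∑' x, g x := by
  obtain ⟨h1, h2⟩ := adj_sum g hg0 hg
  have e : (fun z : Vtx N × Vtx N => if LatAdj z.1 z.2 then g z.2 else 0) =
      (fun z : Vtx N × Vtx N => if LatAdj z.1 z.2 then g z.1 else 0) ∘ Equiv.prodComm _ _ := by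
    funext z
    change _ = (if LatAdj z.2 z.1 then g z.2 else 0)
    by_cases hz : LatAdj z.1 z.2
    · rw [if_pos hz, if_pos (adj_symm.1 hz)]
    · rw [if_neg hz, if_neg (fun h => hz (adj_symm.2 h))]
  rw [e]
  refine ⟨(Equiv.prodComm _ _).summable_iff.2 h1, ?_⟩
  rw [← h2]
  exact (Equiv.prodComm _ _).tsum_eq (fun z : Vtx N × Vtx N => if LatAdj z.1 z.2 then g z.1 else 0)

theorem abs_sub_rpow_le {p : ℝ} (hp : 0 < p) (a b : ℝ) :
    |a - b| ^ p ≤ 2 ^ p * |a| ^ p + 2 ^ p * |b| ^ p := by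
  have h0 : |a - b| ≤ |a| + |b| := abs_sub a b
  rcases le_total |a| |b| with h | h
  · have : |a - b| ^ p ≤ (2 * |b|) ^ p :=
      Real.rpow_le_rpow (abs_nonneg _) (by linarith) hp.le
    rw [Real.mul_rpow (by norm_num) (abs_nonneg _)] at this
    have : 0 ≤ (2:ℝ) ^ p * |a| ^ p := by positivity
    linarith
  · have : |a - b| ^ p ≤ (2 * |a|) ^ p :=
      Real.rpow_le_rpow (abs_nonneg _) (by linarith) hp.le
    rw [Real.mul_rpow (by norm_num) (abs_nonneg _)] at this
    have : 0 ≤ (2:ℝ) ^ p * |b| ^ p := by positivity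
    linarith

theorem energy_summable {p : ℝ} (hp : 0 < p) {u : Vtx N → ℝ} (hu : memE N p u) :
    (Summable fun z : Vtx N × Vtx N => if LatAdj z.1 z.2 then |u z.1 - u z.2| ^ p else 0) ∧
    pEnergy N p u ≤ 2 ^ p * Cdeg N * ∑' x, |u x| ^ p := by
  obtain ⟨h1, h1'⟩ := adj_sum (fun x => |u x| ^ p) (fun x => by positivity) hu
  obtain ⟨h2, h2'⟩ := adj_summable2 (fun x => |u x| ^ p) (fun x => by positivity) hu
  have hs := (h1.mul_left (2 ^ p)).add (h2.mul_left (2 ^ p))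
  have hle : ∀ z : Vtx N × Vtx N, (if LatAdj z.1 z.2 then |u z.1 - u z.2| ^ p else 0) ≤
      2 ^ p * (if LatAdj z.1 z.2 then |u z.1| ^ p else 0) +
      2 ^ p * (if LatAdj z.1 z.2 then |u z.2| ^ p else 0) := by
    intro z
    split_ifs
    · exact abs_sub_rpow_le hp _ _
    · simp
  have hS := Summable.of_nonneg_of_le (fun z => by split_ifs <;> positivity) hle hs
  refine ⟨hS, ?_⟩
  have := hS.tsum_le_tsum hle hs
  rw [(h1.mul_left (2 ^ p)).tsum_add (h2.mul_left (2 ^ p)), tsum_mul_left, tsum_mul_left, h1', h2'] at this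
  unfold pEnergy
  linarith

theorem sum_diff {ι : Type*} {g g' : ι → ℝ} (hg : Summable g) (hg' : Summable g') (s : Finset ι)
    (h : ∀ i ∉ s, g i = g' i) : ∑' i, g i - ∑' i, g' i = ∑ i ∈ s, g i - ∑ i ∈ s, g' i := by
  rw [← hg.tsum_sub hg', ← Finset.sum_sub_distrib]
  apply tsum_eq_sum
  intro i hi
  rw [h i hi, sub_self]

theorem periodic_all {α : Type*} (T : ℤ) (G : Vtx N → α)
    (h : ∀ x (i : Fin N), G (x + T • Pi.single i 1) = G x) (x k : Vtx N) : G (x + T • k) = G x := by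
  let A : AddSubgroup (Vtx N) :=
    { carrier := {k | ∀ x, G (x + T • k) = G x}
      zero_mem' := by intro x; simp
      add_mem' := by
        intro a b ha hb x
        rw [smul_add, ← add_assoc, hb, ha]
      neg_mem' := by
        intro a ha x
        have := ha (x + T • (-a))
        rw [← this]; congr 1; simp }
  have : k ∈ A := by
    have e : k = ∑ i, k i • (Pi.single i 1 : Vtx N) := by
      funext j; simp [Finset.sum_apply, Pi.single_apply]
    rw [e]
    apply A.sum_mem
    intro i _
    apply A.zsmul_mem
    exact fun x => h x i
  exact this x

def cell (N T : ℕ) : Finset (Vtx N) := Finset.Icc 0 (fun _ => (T : ℤ))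

theorem cell_rep {T : ℕ} (hT : 0 < T) (x : Vtx N) :
    ∃ k : Vtx N, ∃ r ∈ cell N T, x = r + (T : ℤ) • k := by
  refine ⟨fun i => x i / T, fun i => x i % T, ?_, ?_⟩
  · have hT' : (0:ℤ) < T := by exact_mod_cast hT
    unfold cell; rw [Finset.mem_Icc]
    constructor <;> intro i
    · exact Int.emod_nonneg _ hT'.ne'
    · exact (Int.emod_lt_of_pos _ hT').le
  · funext i
    simp [Int.emod_add_mul_ediv]

end lattice

theorem phi_diag {N : ℕ} {p : ℝ} (hp : 0 < p) (V : Vtx N → ℝ) (f : Vtx N → ℝ → ℝ) (u : Vtx N → ℝ) :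
    PhiDeriv N p V f u u = eNormP N p V u - ∑' x, kk f x (u x) := by
  have key : ∀ d : ℝ, |d| ^ (p - 2) * d * d = |d| ^ p := by
    intro d
    rcases eq_or_ne d 0 with rfl | hd
    · simp [Real.zero_rpow hp.ne']
    · have hd' := abs_pos.2 hd
      have : |d| ^ p = |d| ^ (p - 2) * |d| ^ (2:ℝ) := by
        rw [← Real.rpow_add hd']; ring_nf
      rw [this, mul_assoc]; congr 1
      rw [Real.rpow_two, sq_abs, sq]
  unfold PhiDeriv eNormP gradPair pEnergy kk
  congr 1
  congr 1
  · congr 1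
    apply tsum_congr
    intro z
    split_ifs
    · rw [key, abs_sub_comm]
    · rfl
  · apply tsum_congr
    intro x
    rw [mul_assoc, mul_assoc, ← mul_assoc (|u x| ^ (p - 2)), key]

namespace Hyp
variable {N : ℕ} {p : ℝ} {V : Vtx N → ℝ} {f : Vtx N → ℝ → ℝ} {T : ℕ}

theorem Vper (h : Hyp p V f T) (x k : Vtx N) : V (x + (T:ℤ) • k) = V x :=
  periodic_all (T:ℤ) V h.hA2V x k

theorem fper (h : Hyp p V f T) (x k : Vtx N) : f (x + (T:ℤ) • k) = f x :=
  periodic_all (T:ℤ) f (fun x i => funext fun u => h.hA2f x i u) x k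

theorem Vlow (h : Hyp p V f T) : ∃ V0 > 0, ∀ x, V0 ≤ V x := by
  have hne : (cell N T).Nonempty := by
    obtain ⟨k, r, hr, _⟩ := cell_rep h.hT (0 : Vtx N)
    exact ⟨r, hr⟩
  obtain ⟨r0, _, hr0⟩ := (cell N T).exists_min_image V hne
  refine ⟨V r0, h.hVpos _, fun x => ?_⟩
  obtain ⟨k, r, hr, rfl⟩ := cell_rep h.hT x
  rw [h.Vper]; exact hr0 r hr

theorem Vup (h : Hyp p V f T) : ∃ V1 > 0, ∀ x, V x ≤ V1 := by
  have hne : (cell N T).Nonempty := by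
    obtain ⟨k, r, hr, _⟩ := cell_rep h.hT (0 : Vtx N)
    exact ⟨r, hr⟩
  obtain ⟨r0, _, hr0⟩ := (cell N T).exists_max_image V hne
  refine ⟨V r0, h.hVpos _, fun x => ?_⟩
  obtain ⟨k, r, hr, rfl⟩ := cell_rep h.hT x
  rw [h.Vper]; exact hr0 r hr

theorem Vsum (h : Hyp p V f T) {u : Vtx N → ℝ} (hu : memE N p u) :
    Summable fun x => V x * |u x| ^ p := by
  obtain ⟨V1, _, h1⟩ := h.Vup
  refine Summable.of_nonneg_of_le (fun x => ?_) (fun x => ?_) (Summable.mul_left V1 hu)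
  · have := h.hVpos x; positivity
  · exact mul_le_mul_of_nonneg_right (h1 x) (by positivity)

theorem Jup (h : Hyp p V f T) : ∃ C > 0, ∀ u, memE N p u → eNormP N p V u ≤ C * ∑' x, |u x| ^ p := by
  obtain ⟨V1, hV, h1⟩ := h.Vup
  have hC : 0 ≤ Cdeg N := by
    unfold Cdeg; exact tsum_nonneg fun d => by split_ifs <;> norm_num
  refine ⟨2 ^ p * Cdeg N + V1, by positivity, fun u hu => ?_⟩
  unfold eNormP
  have := (energy_summable h.p0 hu).2
  have h2 := (h.Vsum hu).tsum_le_tsum (fun x => mul_le_mul_of_nonneg_right (h1 x) (by positivity)) (Summable.mul_left V1 hu)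
  rw [tsum_mul_left] at h2
  linarith

theorem Jlow (h : Hyp p V f T) : ∃ c > 0, ∀ u, memE N p u → c * ∑' x, |u x| ^ p ≤ eNormP N p V u := by
  obtain ⟨V0, hV, h1⟩ := h.Vlow
  refine ⟨V0, hV, fun u hu => ?_⟩
  unfold eNormP
  have h2 := (Summable.mul_left V0 hu).tsum_le_tsum (fun x => mul_le_mul_of_nonneg_right (h1 x) (by positivity)) (h.Vsum hu)
  rw [tsum_mul_left] at h2
  have : 0 ≤ pEnergy N p u := by
    unfold pEnergy
    have : 0 ≤ ∑' z : Vtx N × Vtx N, if LatAdj z.1 z.2 then |u z.1 - u z.2| ^ p else 0 :=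
      tsum_nonneg fun z => by split_ifs <;> positivity
    linarith
  linarith

theorem lp_pos (h : Hyp p V f T) {u : Vtx N → ℝ} (hu : memE N p u) (h0 : u ≠ 0) :
    0 < ∑' x, |u x| ^ p := by
  obtain ⟨x, hx⟩ := Function.ne_iff.1 h0
  exact hu.tsum_pos (fun x => by positivity) x (Real.rpow_pos_of_pos (abs_pos.2 hx) _)

theorem Jpos (h : Hyp p V f T) {u : Vtx N → ℝ} (hu : memE N p u) (h0 : u ≠ 0) :
    0 < eNormP N p V u := by
  obtain ⟨c, hc, H⟩ := h.Jlow
  have := h.lp_pos hu h0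
  exact lt_of_lt_of_le (by positivity) (H u hu)

theorem memE_small (h : Hyp p V f T) {u : Vtx N → ℝ} (hu : memE N p u) {δ : ℝ} (hδ : 0 < δ) :
    ∀ᶠ x in cofinite, |u x| < δ := by
  have := hu.tendsto_cofinite_zero.eventually (gt_mem_nhds (show 0 < δ ^ p by positivity))
  filter_upwards [this] with x hx
  exact (Real.rpow_lt_rpow_iff (abs_nonneg _) hδ.le h.p0).1 hx

theorem ksum (h : Hyp p V f T) {u : Vtx N → ℝ} (hu : memE N p u) :
    Summable fun x => kk f x (u x) := by
  obtain ⟨δ, hδ, H⟩ := h.ksmall 1 one_pos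
  refine Summable.of_norm_bounded_eventually hu ?_
  filter_upwards [h.memE_small hu hδ] with x hx
  simpa using H x (u x) hx

theorem Fsum (h : Hyp p V f T) {u : Vtx N → ℝ} (hu : memE N p u) :
    Summable fun x => Fprim f x (u x) :=
  Summable.of_nonneg_of_le (fun x => h.Fnn x _) (fun x => h.Fle x _) ((h.ksum hu).div_const p)

theorem hsum (h : Hyp p V f T) {u : Vtx N → ℝ} (hu : memE N p u) :
    Summable fun x => hh p f x (u x) :=
  Summable.of_nonneg_of_le (fun x => h.hnn x _) (fun x => h.hle x _) ((h.ksum hu).div_const p)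

theorem memE_smul {u : Vtx N → ℝ} (hu : memE N p u) {t : ℝ} (ht : 0 < t) : memE N p (t • u) := by
  unfold memE at *
  have : (fun x => |(t • u) x| ^ p) = fun x => t ^ p * |u x| ^ p := by
    funext x
    simp [abs_mul, abs_of_pos ht, Real.mul_rpow ht.le (abs_nonneg _)]
  rw [this]; exact hu.mul_left _

theorem J_smul (u : Vtx N → ℝ) {t : ℝ} (ht : 0 < t) : eNormP N p V (t • u) = t ^ p * eNormP N p V u := by
  unfold eNormP pEnergy
  rw [mul_add, ← tsum_mul_left (a := t ^ p), mul_left_comm, ← tsum_mul_left (a := t ^ p)]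
  congr 1
  · congr 1; apply tsum_congr; intro z
    split_ifs
    · simp [← mul_sub, abs_mul, abs_of_pos ht, Real.mul_rpow ht.le (abs_nonneg _)]
    · simp
  · apply tsum_congr; intro x
    simp [abs_mul, abs_of_pos ht, Real.mul_rpow ht.le (abs_nonneg _)]
    ring

theorem Phi_eq (h : Hyp p V f T) {u : Vtx N → ℝ} (hu : u ∈ Nehari N p V f) :
    PhiFun N p V f u = ∑' x, hh p f x (u x) := by
  obtain ⟨h1, h2, h3⟩ := hu
  rw [phi_diag h.p0, sub_eq_zero] at h3
  unfold PhiFun hh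
  rw [((h.ksum h1).div_const p).tsum_sub (h.Fsum h1), tsum_div_const, h3]
  ring

theorem hh_pos (h : Hyp p V f T) {u : Vtx N → ℝ} (hu : memE N p u) (h0 : u ≠ 0) :
    0 < ∑' x, hh p f x (u x) := by
  obtain ⟨x, hx⟩ := Function.ne_iff.1 h0
  exact (h.hsum hu).tsum_pos (fun x => h.hnn x _) x (h.hpos x hx)

theorem Phi_max (h : Hyp p V f T) {u : Vtx N → ℝ} (hu : u ∈ Nehari N p V f) {t : ℝ} (ht : 0 < t) :
    PhiFun N p V f (t • u) ≤ PhiFun N p V f u := by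
  have hp0 := h.p0
  obtain ⟨h1, h2, h3⟩ := hu
  rw [phi_diag hp0, sub_eq_zero] at h3
  have ht1 := memE_smul h1 ht
  unfold PhiFun
  rw [J_smul u ht, h3]
  have e := ((h.Fsum h1).sub (h.Fsum ht1)).tsum_le_tsum (g := fun x => (1 - t ^ p) / p * kk f x (u x))
    (fun x => by
      have := h.Fdiff x (u x) ht
      rw [div_mul_eq_mul_div, le_div_iff₀ hp0]
      simp only [Pi.smul_apply, smul_eq_mul]
      linarith) ((h.ksum h1).mul_left _)
  rw [(h.Fsum h1).tsum_sub (h.Fsum ht1), tsum_mul_left] at e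
  have e2 : (1 - t ^ p) / p * ∑' x, kk f x (u x) = 1 / p * ∑' x, kk f x (u x) -
    1 / p * (t ^ p * ∑' x, kk f x (u x)) := by ring
  linarith

end Hyp
namespace Hyp
variable {N : ℕ} {p : ℝ} {V : Vtx N → ℝ} {f : Vtx N → ℝ → ℝ} {T : ℕ}

theorem K_ivt (h : Hyp p V f T) {v : Vtx N → ℝ} (hv : memE N p v) {a b : ℝ} (ha : 0 < a) (hab : a ≤ b)
    (h1 : 0 ≤ PhiDeriv N p V f (a • v) (a • v)) (h2 : PhiDeriv N p V f (b • v) (b • v) ≤ 0) :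
    ∃ t ∈ Set.Icc a b, PhiDeriv N p V f (t • v) (t • v) = 0 := by
  have hp0 := h.p0
  have hb : 0 < b := ha.trans_le hab
  have hsum := h.ksum (memE_smul hv hb)
  have hc : ContinuousOn (fun t : ℝ => PhiDeriv N p V f (t • v) (t • v)) (Set.Icc a b) := by
    have : ContinuousOn (fun t : ℝ => t ^ p * eNormP N p V v - ∑' x, kk f x (t * v x)) (Set.Icc a b) := by
      apply ContinuousOn.sub
      · apply ContinuousOn.mul _ continuousOn_const
        exact continuousOn_id.rpow_const (fun _ _ => Or.inr hp0.le)
      · apply continuousOn_tsum (u := fun x => kk f x (b * v x))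
        · intro x
          exact ((h.kcont x).comp (by fun_prop)).continuousOn
        · simpa using hsum
        · intro x t ht
          rw [Real.norm_of_nonneg (h.knn x _)]
          have ht0 := ha.trans_le ht.1
          have h3 := h.kmono x (v x) ht0 ht.2
          have h4 : t ^ p ≤ b ^ p := Real.rpow_le_rpow ht0.le ht.2 hp0.le
          have h5 := mul_le_mul_of_nonneg_left h4 (h.knn x (b * v x))
          have h6 : 0 < b ^ p := by positivity
          exact le_of_mul_le_mul_right (h3.trans h5) h6
    refine this.congr fun t ht => ?_
    dsimp only
    rw [phi_diag hp0, J_smul v (ha.trans_le ht.1)]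
    rfl
  have := intermediate_value_Icc' hab hc
  obtain ⟨t, ht, h⟩ := this ⟨h2, h1⟩
  exact ⟨t, ht, h⟩

theorem small_J (h : Hyp p V f T) : ∃ δ > 0, ∀ u, memE N p u → (∀ x, |u x| < δ) →
    ∑' x, kk f x (u x) ≤ eNormP N p V u / 2 := by
  obtain ⟨c, hc, H⟩ := h.Jlow
  obtain ⟨δ, hδ, H2⟩ := h.ksmall (c / 2) (by positivity)
  refine ⟨δ, hδ, fun u hu hs => ?_⟩
  have := (h.ksum hu).tsum_le_tsum (fun x => (le_abs_self _).trans (H2 x (u x) (hs x))) (hu.mul_left _)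
  rw [tsum_mul_left] at this
  have := H u hu
  linarith

theorem sup_bound (h : Hyp p V f T) {u : Vtx N → ℝ} (hu : memE N p u) (x : Vtx N) :
    |u x| ^ p ≤ ∑' x, |u x| ^ p :=
  hu.le_tsum x (fun y _ => by positivity)

theorem memE_bdd (h : Hyp p V f T) {u : Vtx N → ℝ} (hu : memE N p u) : ∃ B > 0, ∀ x, |u x| ≤ B := by
  have h0 : 0 ≤ ∑' x, |u x| ^ p := tsum_nonneg fun x => by positivity
  refine ⟨(∑' x, |u x| ^ p) ^ p⁻¹ + 1, by positivity, fun x => ?_⟩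
  have := Real.rpow_le_rpow (by positivity) (h.sup_bound hu x) (inv_nonneg.2 h.p0.le)
  rw [Real.rpow_rpow_inv (abs_nonneg _) h.p0.ne'] at this
  linarith

theorem project (h : Hyp p V f T) {w : Vtx N → ℝ} (hw : memE N p w) (h0 : w ≠ 0)
    (hK : PhiDeriv N p V f w w ≤ 0) : ∃ t : ℝ, 0 < t ∧ t ≤ 1 ∧ t • w ∈ Nehari N p V f := by
  obtain ⟨δ, hδ, H⟩ := h.small_J
  obtain ⟨B, hB, HB⟩ := h.memE_bdd hw
  set a := min 1 (δ / (2 * B)) with hadef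
  have ha : 0 < a := by rw [hadef]; positivity
  have ha1 : a ≤ 1 := min_le_left _ _
  have haB : a * B < δ := by
    have : a ≤ δ / (2 * B) := min_le_right _ _
    rw [le_div_iff₀ (by positivity)] at this
    nlinarith
  have hsm := H (a • w) (memE_smul hw ha) (fun x => by
    simp only [Pi.smul_apply, smul_eq_mul, abs_mul, abs_of_pos ha]
    nlinarith [HB x])
  have hne : ∀ t : ℝ, 0 < t → t • w ≠ 0 := fun t ht => smul_ne_zero ht.ne' h0
  have hJ := h.Jpos (memE_smul hw ha) (hne a ha)
  obtain ⟨t, ht, hKt⟩ := h.K_ivt hw ha ha1 (by rw [phi_diag h.p0]; linarith) (by simpa using hK)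
  have ht0 := ha.trans_le ht.1
  exact ⟨t, ht0, ht.2, memE_smul hw ht0, hne t ht0, hKt⟩

theorem below (h : Hyp p V f T) {w : Vtx N → ℝ} (hw : memE N p w) (h0 : w ≠ 0)
    (hK : PhiDeriv N p V f w w ≤ 0) :
    ∃ v ∈ Nehari N p V f, PhiFun N p V f v ≤ ∑' x, hh p f x (w x) := by
  obtain ⟨t, ht, ht1, hN⟩ := h.project hw h0 hK
  refine ⟨_, hN, ?_⟩
  rw [h.Phi_eq hN]
  exact (h.hsum (memE_smul hw ht)).tsum_le_tsum (fun x => h.hmono x (w x) ht ht1) (h.hsum hw)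

theorem memE_single (h : Hyp p V f T) (x : Vtx N) (a : ℝ) : memE N p (Pi.single x a) := by
  apply summable_of_ne_finset_zero (s := {x})
  intro y hy
  rw [Finset.mem_singleton] at hy
  simp [Pi.single_eq_of_ne hy, Real.zero_rpow h.p0.ne']

theorem nehari_ne (h : Hyp p V f T) : (Nehari N p V f).Nonempty := by
  have hp0 := h.p0
  set e : Vtx N → ℝ := Pi.single 0 1 with he
  obtain ⟨R, hR, H⟩ := h.hA5 (eNormP N p V e)
  have hm := memE_smul (h.memE_single (0 : Vtx N) 1) hR
  have hne : R • e ≠ 0 := by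
    apply smul_ne_zero hR.ne'
    rw [he]; simp
  obtain ⟨t, _, _, hN⟩ := h.project hm hne (by
    rw [phi_diag hp0, J_smul _ hR]
    have h1 := H 0 R (le_abs_self _)
    rw [abs_of_pos hR, le_div_iff₀ (by positivity)] at h1
    have h2 := h.Fle 0 R
    rw [le_div_iff₀ hp0] at h2
    have h3 := (h.ksum hm).le_tsum 0 (fun y _ => h.knn y _)
    have e1 : (R • (Pi.single 0 1 : Vtx N → ℝ)) 0 = R := by simp
    rw [e1] at h3
    have h4 := h.Fnn 0 R
    have := h.hp
    have : Fprim f 0 R ≤ Fprim f 0 R * p := by nlinarith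
    rw [← he]
    linarith)
  exact ⟨_, hN⟩

theorem Phi_pos (h : Hyp p V f T) {u : Vtx N → ℝ} (hu : u ∈ Nehari N p V f) :
    0 < PhiFun N p V f u := by
  rw [h.Phi_eq hu]; exact h.hh_pos hu.1 hu.2.1

theorem bdd (h : Hyp p V f T) (K : ℝ) : ∃ C, ∀ u ∈ Nehari N p V f, PhiFun N p V f u ≤ K →
    ∑' x, |u x| ^ p ≤ C := by
  have hp0 := h.p0
  obtain ⟨c, hc, Hc⟩ := h.Jlow
  obtain ⟨δ, hδ, Hδ⟩ := h.small_J
  set A := 2 * p * (|K| + 1) with hA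
  have hA0 : 0 < A := by positivity
  obtain ⟨R, hR, HR⟩ := h.hA5 (A / δ ^ p)
  refine ⟨A * R ^ p / δ ^ p / c, fun u hu hK => ?_⟩
  have hJ := h.Jpos hu.1 hu.2.1
  set J := eNormP N p V u with hJdef
  set τ := (A / J) ^ p⁻¹ with hτ
  have hτ0 : 0 < τ := by positivity
  have hτp : τ ^ p = A / J := Real.rpow_inv_rpow (by positivity) hp0.ne'
  have hτm := memE_smul hu.1 hτ0
  have hJτ : eNormP N p V (τ • u) = A := by
    rw [J_smul u hτ0, hτp, ← hJdef]; field_simp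
  have hx : ∃ x, δ ≤ τ * |u x| := by
    by_contra hcon
    push Not at hcon
    have h1 := Hδ (τ • u) hτm (fun x => by
      simpa [abs_mul, abs_of_pos hτ0] using hcon x)
    have h2 := h.Phi_max hu hτ0
    have h3 := (h.Fsum hτm).tsum_le_tsum (fun x => h.Fle x _) ((h.ksum hτm).div_const p)
    rw [tsum_div_const] at h3
    rw [hJτ] at h1
    unfold PhiFun at h2 hK
    rw [hJτ] at h2
    have h4 : (∑' x, kk f x ((τ • u) x)) / p ≤ A / 2 / p := div_le_div_of_nonneg_right h1 hp0.le
    have h5 : 1 / p * A - A / 2 / p = |K| + 1 := by rw [hA]; field_simp; ring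
    have := le_abs_self K
    linarith
  obtain ⟨x, hx⟩ := hx
  have h1 : δ ^ p ≤ A / J * |u x| ^ p := by
    have := Real.rpow_le_rpow hδ.le hx hp0.le
    rwa [Real.mul_rpow hτ0.le (abs_nonneg _), hτp] at this
  have hδp : 0 < δ ^ p := by positivity
  have h2 : J ≤ A / δ ^ p * |u x| ^ p := by
    rw [div_mul_eq_mul_div, le_div_iff₀ hδp]
    rw [div_mul_eq_mul_div, le_div_iff₀ hJ] at h1
    linarith
  have h3 : |u x| < R := by
    by_contra hcon
    push Not at hcon
    have h4 := HR x (u x) hcon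
    have hux : 0 < |u x| := hR.trans_le hcon
    rw [le_div_iff₀ (by positivity)] at h4
    have h5 := (h.Fsum hu.1).le_tsum x (fun y _ => h.Fnn y _)
    have h6 := h.Phi_pos hu
    unfold PhiFun at h6
    rw [← hJdef] at h6
    have h7 : 1 / p * J < 1 * J := by
      apply mul_lt_mul_of_pos_right _ hJ
      rw [div_lt_one hp0]; exact h.hp
    linarith
  have h4 : |u x| ^ p ≤ R ^ p := Real.rpow_le_rpow (abs_nonneg _) h3.le hp0.le
  have h5 := Hc u hu.1
  rw [le_div_iff₀ hc]
  calc (∑' x, |u x| ^ p) * c ≤ J := by linarith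
    _ ≤ A / δ ^ p * |u x| ^ p := h2
    _ ≤ A / δ ^ p * R ^ p := by gcongr
    _ = _ := by ring

theorem nonvan (h : Hyp p V f T) : ∃ δ > 0, ∀ u ∈ Nehari N p V f, ∃ x, δ ≤ |u x| := by
  obtain ⟨δ, hδ, H⟩ := h.small_J
  refine ⟨δ, hδ, fun u hu => ?_⟩
  by_contra hcon
  push Not at hcon
  have h1 := H u hu.1 hcon
  have h2 := h.Jpos hu.1 hu.2.1
  have h3 := hu.2.2
  rw [phi_diag h.p0] at h3
  linarith

theorem translate (h : Hyp p V f T) (k : Vtx N) {u : Vtx N → ℝ} (hu : u ∈ Nehari N p V f) :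
    (fun x => u (x + (T:ℤ) • k)) ∈ Nehari N p V f ∧
    PhiFun N p V f (fun x => u (x + (T:ℤ) • k)) = PhiFun N p V f u := by
  set e := Equiv.addRight ((T:ℤ) • k) with he
  have hJ : eNormP N p V (fun x => u (x + (T:ℤ) • k)) = eNormP N p V u := by
    unfold eNormP pEnergy
    congr 1
    · congr 1
      rw [← (Equiv.prodCongr e e).tsum_eq
        (fun z : Vtx N × Vtx N => if LatAdj z.1 z.2 then |u z.1 - u z.2| ^ p else 0)]
      apply tsum_congr
      intro z
      change _ = (if LatAdj (z.1 + (T:ℤ) • k) (z.2 + (T:ℤ) • k) then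
        |u (z.1 + (T:ℤ) • k) - u (z.2 + (T:ℤ) • k)| ^ p else 0)
      by_cases hz : LatAdj z.1 z.2
      · rw [if_pos hz, if_pos (adj_add.2 hz)]
      · rw [if_neg hz, if_neg (fun h => hz (adj_add.1 h))]
    · rw [← e.tsum_eq (fun x => V x * |u x| ^ p)]
      apply tsum_congr
      intro x
      change _ = V (x + (T:ℤ) • k) * |u (x + (T:ℤ) • k)| ^ p
      rw [h.Vper]
  have hk : ∑' x, kk f x (u (x + (T:ℤ) • k)) = ∑' x, kk f x (u x) := by
    rw [← e.tsum_eq (fun x => kk f x (u x))]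
    apply tsum_congr
    intro x
    change _ = kk f (x + (T:ℤ) • k) (u (x + (T:ℤ) • k))
    unfold kk; rw [h.fper]
  have hF : ∑' x, Fprim f x (u (x + (T:ℤ) • k)) = ∑' x, Fprim f x (u x) := by
    rw [← e.tsum_eq (fun x => Fprim f x (u x))]
    apply tsum_congr
    intro x
    change _ = Fprim f (x + (T:ℤ) • k) (u (x + (T:ℤ) • k))
    unfold Fprim; rw [h.fper]
  refine ⟨⟨?_, ?_, ?_⟩, ?_⟩
  · exact e.summable_iff.2 hu.1
  · obtain ⟨x, hx⟩ := Function.ne_iff.1 hu.2.1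
    refine Function.ne_iff.2 ⟨x - (T:ℤ) • k, ?_⟩
    simpa using hx
  · have := hu.2.2
    rw [phi_diag h.p0] at this ⊢
    rw [hJ, hk, this]
  · unfold PhiFun; rw [hJ, hF]

end Hyp

section loc
variable {N : ℕ}
def nbh (B : Finset (Vtx N)) : Finset (Vtx N) := B.biUnion fun x => Finset.Icc (x - 1) (x + 1)

def LJ (p : ℝ) (V : Vtx N → ℝ) (B : Finset (Vtx N)) (u : Vtx N → ℝ) : ℝ :=
  (1/2) * ∑ z ∈ nbh B ×ˢ nbh B, (if LatAdj z.1 z.2 then |u z.1 - u z.2| ^ p else 0) +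
    ∑ x ∈ B, V x * |u x| ^ p

theorem pair_not_mem {B : Finset (Vtx N)} {z : Vtx N × Vtx N} (hz : z ∉ nbh B ×ˢ nbh B)
    (ha : LatAdj z.1 z.2) : z.1 ∉ B ∧ z.2 ∉ B := by
  constructor <;> intro hB <;> apply hz <;> rw [Finset.mem_product] <;>
    constructor <;> refine Finset.mem_biUnion.2 ⟨_, hB, ?_⟩
  · exact self_mem _
  · exact adj_mem ha
  · exact adj_mem (adj_symm.1 ha)
  · exact self_mem _

theorem LJ_cont {p : ℝ} (hp : 0 < p) (V : Vtx N → ℝ) (B : Finset (Vtx N)) :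
    Continuous (LJ p V B) := by
  unfold LJ
  apply Continuous.add
  · apply continuous_const.mul
    apply continuous_finsetSum
    intro z _
    by_cases hz : LatAdj z.1 z.2
    · simp only [if_pos hz]
      exact Continuous.rpow_const (by fun_prop) (fun _ => Or.inr hp.le)
    · simp only [if_neg hz]; exact continuous_const
  · apply continuous_finsetSum
    intro x _
    apply continuous_const.mul
    exact Continuous.rpow_const (by fun_prop) (fun _ => Or.inr hp.le)

theorem Hyp.J_diff {p : ℝ} {V : Vtx N → ℝ} {f : Vtx N → ℝ → ℝ} {T : ℕ} (h : Hyp p V f T)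
    (B : Finset (Vtx N)) {u w : Vtx N → ℝ} (hu : memE N p u) (hw : memE N p w)
    (huw : ∀ x ∉ B, u x = w x) :
    eNormP N p V u - eNormP N p V w = LJ p V B u - LJ p V B w := by
  have h1 := sum_diff (energy_summable h.p0 hu).1 (energy_summable h.p0 hw).1 (nbh B ×ˢ nbh B) (by
    intro z hz
    by_cases ha : LatAdj z.1 z.2
    · obtain ⟨h1, h2⟩ := pair_not_mem hz ha
      simp only [huw _ h1, huw _ h2]
    · simp only [if_neg ha])
  have h2 := sum_diff (h.Vsum hu) (h.Vsum hw) B (by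
    intro x hx; simp only [huw x hx])
  unfold eNormP pEnergy LJ
  linarith

theorem memE_congr {p : ℝ} (B : Finset (Vtx N)) {u w : Vtx N → ℝ} (hu : memE N p u)
    (huw : ∀ x ∉ B, w x = u x) : memE N p w := by
  unfold memE at *
  have : Summable fun x => |w x| ^ p - |u x| ^ p := by
    apply summable_of_ne_finset_zero (s := B)
    intro x hx; rw [huw x hx, sub_self]
  simpa using this.add hu

def LK (p : ℝ) (V : Vtx N → ℝ) (f : Vtx N → ℝ → ℝ) (B : Finset (Vtx N)) (u : Vtx N → ℝ) : ℝ :=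
  LJ p V B u - ∑ x ∈ B, kk f x (u x)

theorem Hyp.LK_cont {p : ℝ} {V : Vtx N → ℝ} {f : Vtx N → ℝ → ℝ} {T : ℕ} (h : Hyp p V f T)
    (B : Finset (Vtx N)) : Continuous (LK p V f B) := by
  unfold LK
  apply (LJ_cont h.p0 V B).sub
  apply continuous_finsetSum
  intro x _
  exact (h.kcont x).comp (continuous_apply x)

theorem Hyp.K_diff {p : ℝ} {V : Vtx N → ℝ} {f : Vtx N → ℝ → ℝ} {T : ℕ} (h : Hyp p V f T)
    (B : Finset (Vtx N)) {u w : Vtx N → ℝ} (hu : memE N p u) (hw : memE N p w)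
    (huw : ∀ x ∉ B, u x = w x) :
    PhiDeriv N p V f u u - PhiDeriv N p V f w w = LK p V f B u - LK p V f B w := by
  have h1 := h.J_diff B hu hw huw
  have h2 := sum_diff (h.ksum hu) (h.ksum hw) B (by
    intro x hx; simp only [huw x hx])
  rw [phi_diag h.p0, phi_diag h.p0]
  unfold LK
  linarith
end loc
def cut {N : ℕ} (B : Finset (Vtx N)) (u : Vtx N → ℝ) : Vtx N → ℝ := fun x => if x ∈ B then 0 else u x

theorem cut_cont {N : ℕ} (B : Finset (Vtx N)) : Continuous (cut B) := by
  apply continuous_pi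
  intro x
  unfold cut
  by_cases hx : x ∈ B
  · simp only [if_pos hx]; exact continuous_const
  · simp only [if_neg hx]; exact continuous_apply x

theorem cut_off {N : ℕ} {B : Finset (Vtx N)} (u : Vtx N → ℝ) {x : Vtx N} (hx : x ∉ B) :
    cut B u x = u x := by simp [cut, hx]

theorem cut_on {N : ℕ} {B : Finset (Vtx N)} (u : Vtx N → ℝ) {x : Vtx N} (hx : x ∈ B) :
    cut B u x = 0 := by simp [cut, hx]

namespace Hyp
variable {N : ℕ} {p : ℝ} {V : Vtx N → ℝ} {f : Vtx N → ℝ → ℝ} {T : ℕ}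

theorem K_zero (h : Hyp p V f T) : PhiDeriv N p V f 0 0 = 0 := by
  rw [phi_diag h.p0]
  simp [eNormP, pEnergy, kk_zero, Real.zero_rpow h.p0.ne']

theorem exists_min (h : Hyp p V f T) :
    ∃ u ∈ Nehari N p V f, ∀ v ∈ Nehari N p V f, PhiFun N p V f u ≤ PhiFun N p V f v := by
  have hp0 := h.p0
  set S := PhiFun N p V f '' Nehari N p V f with hS
  have hSne : S.Nonempty := h.nehari_ne.image _
  have hSb : BddBelow S := ⟨0, by rintro _ ⟨u, hu, rfl⟩; exact (h.Phi_pos hu).le⟩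
  set c := sInf S with hc
  have hcle : ∀ v ∈ Nehari N p V f, c ≤ PhiFun N p V f v := fun v hv => csInf_le hSb ⟨v, hv, rfl⟩
  obtain ⟨y, _, hyt, hyS⟩ := exists_seq_tendsto_sInf hSne hSb
  rw [← hc] at hyt
  obtain ⟨δ, hδ, hnv⟩ := h.nonvan
  -- translated minimizing sequence
  have hseq : ∀ n, ∃ u ∈ Nehari N p V f, PhiFun N p V f u = y n ∧ δ ≤ ∑ r ∈ cell N T, |u r| := by
    intro n
    obtain ⟨u, hu, hy⟩ := hyS n
    obtain ⟨x, hx⟩ := hnv u hu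
    obtain ⟨k, r, hr, rfl⟩ := cell_rep h.hT x
    obtain ⟨h1, h2⟩ := h.translate k hu
    refine ⟨_, h1, h2.trans hy, hx.trans ?_⟩
    exact Finset.single_le_sum (f := fun r => |u (r + (T:ℤ) • k)|) (fun _ _ => abs_nonneg _) hr
  choose U hUN hUy hUδ using hseq
  obtain ⟨Kb, hKb⟩ := hyt.bddAbove_range
  obtain ⟨C, hC⟩ := h.bdd (N := N) Kb
  have hUC : ∀ n, ∑' x, |U n x| ^ p ≤ C := fun n => hC _ (hUN n) (by
    rw [hUy]; exact hKb ⟨n, rfl⟩)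
  have hC0 : 0 ≤ C := le_trans (tsum_nonneg fun x => by positivity) (hUC 0)
  -- compactness
  have hcomp : IsCompact (Set.pi Set.univ fun _ : Vtx N => Set.Icc (-(C ^ p⁻¹)) (C ^ p⁻¹)) :=
    isCompact_univ_pi fun _ => isCompact_Icc
  obtain ⟨u, _, φ, hφ, hlim⟩ := hcomp.tendsto_subseq (x := U) (fun n x _ => by
    have h1 := (h.sup_bound (hUN n).1 x).trans (hUC n)
    have := Real.rpow_le_rpow (by positivity) h1 (inv_nonneg.2 hp0.le)
    rw [Real.rpow_rpow_inv (abs_nonneg _) hp0.ne'] at this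
    exact abs_le.1 this)
  have hpt : ∀ x, Tendsto (fun n => U (φ n) x) atTop (𝓝 (u x)) := fun x =>
    (tendsto_pi_nhds.1 hlim) x
  have hyt' : Tendsto (fun n => y (φ n)) atTop (𝓝 c) := hyt.comp hφ.tendsto_atTop
  have huE : memE N p u := by
    refine summable_of_sum_le (c := C) (fun x => by positivity) (fun s => ?_)
    have : Tendsto (fun n => ∑ x ∈ s, |U (φ n) x| ^ p) atTop (𝓝 (∑ x ∈ s, |u x| ^ p)) := by
      apply tendsto_finsetSum
      intro x _
      exact (hpt x).abs.rpow_const (Or.inr hp0.le)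
    refine le_of_tendsto this (Eventually.of_forall fun n => ?_)
    exact ((hUN (φ n)).1.sum_le_tsum s (fun x _ => by positivity)).trans (hUC _)
  have hlimh : ∀ s : Finset (Vtx N), Tendsto (fun n => ∑ x ∈ s, hh p f x (U (φ n) x)) atTop
      (𝓝 (∑ x ∈ s, hh p f x (u x))) := by
    intro s
    apply tendsto_finsetSum
    intro x _
    exact ((h.hcont x).tendsto _).comp (hpt x)
  have hPhi : ∀ n, ∑' x, hh p f x (U (φ n) x) = y (φ n) := fun n => by
    rw [← h.Phi_eq (hUN _), hUy]
  have hHle : ∑' x, hh p f x (u x) ≤ c := by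
    refine (h.hsum huE).tsum_le_of_sum_le fun s => ?_
    refine le_of_tendsto_of_tendsto (hlimh s) hyt' (Eventually.of_forall fun n => ?_)
    dsimp only
    rw [← hPhi]
    exact (h.hsum (hUN (φ n)).1).sum_le_tsum s (fun x _ => h.hnn x _)
  have hu0 : u ≠ 0 := by
    rintro rfl
    have : Tendsto (fun n => ∑ r ∈ cell N T, |U (φ n) r|) atTop (𝓝 (∑ r ∈ cell N T, |(0 : Vtx N → ℝ) r|)) := by
      apply tendsto_finsetSum
      intro x _
      exact (hpt x).abs
    have := ge_of_tendsto this (Eventually.of_forall fun n => hUδ (φ n))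
    simp at this
    linarith
  rcases le_or_gt (PhiDeriv N p V f u u) 0 with hK | hK
  · obtain ⟨v, hv, hvle⟩ := h.below huE hu0 hK
    exact ⟨v, hv, fun w hw => (hvle.trans hHle).trans (hcle w hw)⟩
  exfalso
  obtain ⟨x0, hx0⟩ := Function.ne_iff.1 hu0
  obtain ⟨D, hD, HD⟩ := h.Jup
  set κ := PhiDeriv N p V f u u with hκ
  have hB : ∃ B : Finset (Vtx N), x0 ∈ B ∧ ∑' x, |u x| ^ p - κ / D < ∑ x ∈ B, |u x| ^ p := by
    have h1 : Tendsto (fun B : Finset (Vtx N) => ∑ x ∈ B, |u x| ^ p) atTop (𝓝 (∑' x, |u x| ^ p)) :=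
      Summable.hasSum huE
    have h2 := h1.eventually (lt_mem_nhds (show ∑' x, |u x| ^ p - κ / D < ∑' x, |u x| ^ p by
      have : 0 < κ / D := by positivity
      linarith))
    obtain ⟨B, hB1, hB2⟩ := (h2.and (eventually_ge_atTop {x0})).exists
    exact ⟨B, by simpa using hB2, hB1⟩
  obtain ⟨B, hxB, hB⟩ := hB
  have hcE : ∀ w : Vtx N → ℝ, memE N p w → memE N p (cut B w) := fun w hw =>
    memE_congr B hw fun x hx => cut_off w hx
  have hgap : 0 < LK p V f B u - LK p V f B (cut B u) := by
    rw [← h.K_diff B huE (hcE u huE) (fun x hx => (cut_off u hx).symm), ← hκ, sub_pos, phi_diag hp0]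
    have h1 := HD _ (hcE u huE)
    have h2 : 0 ≤ ∑' x, kk f x (cut B u x) := tsum_nonneg fun x => h.knn x _
    have h3 := sum_diff (g := fun x => |u x| ^ p) (g' := fun x => |cut B u x| ^ p) huE (hcE u huE) B
      (fun x hx => by simp only [cut_off u hx])
    have h4 : ∑ x ∈ B, |cut B u x| ^ p = 0 := Finset.sum_eq_zero fun x hx => by
      rw [cut_on u hx]; simp [Real.zero_rpow hp0.ne']
    have h5 : D * ∑' x, |cut B u x| ^ p < κ := by
      rw [← lt_div_iff₀' hD]; linarith
    linarith
  have hLK : Tendsto (fun n => LK p V f B (U (φ n)) - LK p V f B (cut B (U (φ n)))) atTop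
      (𝓝 (LK p V f B u - LK p V f B (cut B u))) :=
    (((h.LK_cont B).sub ((h.LK_cont B).comp (cut_cont B))).tendsto u).comp hlim
  have hHn : ∀ n, ∑' x, hh p f x (cut B (U (φ n)) x) = y (φ n) - ∑ x ∈ B, hh p f x (U (φ n) x) := by
    intro n
    have h3 := sum_diff (g := fun x => hh p f x (U (φ n) x)) (g' := fun x => hh p f x (cut B (U (φ n)) x))
      (h.hsum (hUN _).1) (h.hsum (hcE _ (hUN _).1)) B
      (fun x hx => by simp only [cut_off _ hx])
    have h4 : ∑ x ∈ B, hh p f x (cut B (U (φ n)) x) = 0 := Finset.sum_eq_zero fun x hx => by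
      rw [cut_on _ hx, hh_zero]
    rw [hPhi] at h3
    linarith
  have hlimH := hyt'.sub (hlimh B)
  have hBpos : 0 < ∑ x ∈ B, hh p f x (u x) :=
    Finset.sum_pos' (fun x _ => h.hnn x _) ⟨x0, hxB, h.hpos x0 hx0⟩
  obtain ⟨n, hn1, hn2⟩ := ((hLK.eventually (lt_mem_nhds hgap)).and
    (hlimH.eventually (gt_mem_nhds (show c - ∑ x ∈ B, hh p f x (u x) < c by linarith)))).exists
  have hUn := hUN (φ n)
  have hKn : PhiDeriv N p V f (cut B (U (φ n))) (cut B (U (φ n))) < 0 := by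
    have := h.K_diff B hUn.1 (hcE _ hUn.1) (fun x hx => (cut_off _ hx).symm)
    rw [hUn.2.2] at this
    linarith
  have hne : cut B (U (φ n)) ≠ 0 := by
    intro h0
    rw [h0, h.K_zero] at hKn
    exact lt_irrefl _ hKn
  obtain ⟨v, hv, hvle⟩ := h.below (hcE _ hUn.1) hne hKn.le
  rw [hHn] at hvle
  have := hcle v hv
  linarith

end Hyp
def rho (p r : ℝ) : ℝ := |r| ^ (p - 2) * r

theorem rho_neg (p r : ℝ) : rho p (-r) = -rho p r := by simp [rho]

theorem rho_deriv {p : ℝ} (hp : 1 < p) (r : ℝ) : HasDerivAt (fun r : ℝ => |r| ^ p) (p * rho p r) r := by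
  have := hasDerivAt_abs_rpow r hp
  rw [mul_assoc] at this
  exact this

theorem rho_cont {p : ℝ} (hp : 1 < p) : Continuous (rho p) := by
  have h1 : ContDiff ℝ 1 (fun r : ℝ => ‖r‖ ^ p) := contDiff_norm_rpow hp
  have h2 := h1.continuous_deriv le_rfl
  have h3 : deriv (fun r : ℝ => ‖r‖ ^ p) = fun r => p * rho p r := by
    funext r; exact (rho_deriv hp r).deriv
  rw [h3] at h2
  have h4 := h2.const_mul p⁻¹
  have hp0 : p ≠ 0 := by linarith
  have h5 : (fun r => p⁻¹ * (p * rho p r)) = rho p := by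
    funext r; field_simp
  rwa [h5] at h4

theorem abs_rho {p : ℝ} (hp : 1 < p) (r : ℝ) : |rho p r| = |r| ^ (p - 1) := by
  rcases eq_or_ne r 0 with rfl | hr
  · have : p - 1 ≠ 0 := by linarith
    simp [rho, Real.zero_rpow this]
  · have hr' := abs_pos.2 hr
    unfold rho
    rw [abs_mul, abs_of_nonneg (by positivity), ← Real.rpow_add_one hr'.ne']
    ring_nf

theorem rho_mul_le {p : ℝ} (hp : 1 < p) (d a : ℝ) : |rho p d * a| ≤ |d| ^ p + |a| ^ p := by
  rw [abs_mul, abs_rho hp]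
  have key : ∀ c : ℝ, 0 ≤ c → c ^ (p - 1) * c = c ^ p := by
    intro c hc
    rcases hc.eq_or_lt with rfl | hc
    · rw [mul_zero, Real.zero_rpow (by linarith)]
    · rw [← Real.rpow_add_one hc.ne']; ring_nf
  have hd := abs_nonneg d
  have ha := abs_nonneg a
  have hdp : 0 ≤ |d| ^ p := by positivity
  have hap : 0 ≤ |a| ^ p := by positivity
  rcases le_total |d| |a| with hda | hda
  · have : |d| ^ (p - 1) * |a| ≤ |a| ^ (p - 1) * |a| :=
      mul_le_mul_of_nonneg_right (Real.rpow_le_rpow hd hda (by linarith)) ha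
    rw [key _ ha] at this
    linarith
  · have : |d| ^ (p - 1) * |a| ≤ |d| ^ (p - 1) * |d| :=
      mul_le_mul_of_nonneg_left hda (by positivity)
    rw [key _ hd] at this
    linarith

def PD {N : ℕ} (p : ℝ) (V : Vtx N → ℝ) (f : Vtx N → ℝ → ℝ) (x : Vtx N) (v : Vtx N → ℝ) : ℝ :=
  -pLap N p v x + V x * |v x| ^ (p - 2) * v x - f x (v x)

theorem pLap_fin {N : ℕ} (p : ℝ) (v : Vtx N → ℝ) (x : Vtx N) :
    pLap N p v x = ∑ y ∈ nbh {x}, if LatAdj x y then rho p (v y - v x) else 0 := by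
  unfold pLap
  apply tsum_eq_sum
  intro y hy
  rw [if_neg]
  intro h
  apply hy
  unfold nbh
  rw [Finset.singleton_biUnion]
  exact adj_mem h

theorem grad_fin {N : ℕ} (p : ℝ) (v : Vtx N → ℝ) (x : Vtx N) (b : ℝ) :
    ∑ z ∈ nbh {x} ×ˢ nbh {x}, (if LatAdj z.1 z.2 then
      rho p (v z.1 - v z.2) * ((Pi.single x b : Vtx N → ℝ) z.1 - (Pi.single x b : Vtx N → ℝ) z.2) else 0) =
      -2 * (b * pLap N p v x) := by
  set Q := nbh ({x} : Finset (Vtx N)) with hQ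
  have hx : x ∈ Q := by
    rw [hQ]; unfold nbh; rw [Finset.singleton_biUnion]; exact self_mem x
  set G : Vtx N → Vtx N → ℝ := fun y y' => if LatAdj y y' then rho p (v y - v y') else 0 with hG
  have hanti : ∀ y y', G y' y = - G y y' := by
    intro y y'
    simp only [hG]
    by_cases ha : LatAdj y y'
    · rw [if_pos ha, if_pos (adj_symm.1 ha), ← rho_neg, neg_sub]
    · rw [if_neg ha, if_neg (fun h => ha (adj_symm.1 h)), neg_zero]
  set e : Vtx N → ℝ := Pi.single x b with he
  have h1 : ∑ z ∈ Q ×ˢ Q, (if LatAdj z.1 z.2 then rho p (v z.1 - v z.2) * (e z.1 - e z.2) else 0) =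
      ∑ y ∈ Q, ∑ y' ∈ Q, G y y' * e y - ∑ y ∈ Q, ∑ y' ∈ Q, G y y' * e y' := by
    rw [Finset.sum_product, ← Finset.sum_sub_distrib]
    apply Finset.sum_congr rfl; intro y _
    rw [← Finset.sum_sub_distrib]
    apply Finset.sum_congr rfl; intro y' _
    simp only [hG]
    split_ifs <;> ring
  have h2 : ∑ y ∈ Q, ∑ y' ∈ Q, G y y' * e y' = - ∑ y ∈ Q, ∑ y' ∈ Q, G y y' * e y := by
    rw [Finset.sum_comm, ← Finset.sum_neg_distrib]
    apply Finset.sum_congr rfl; intro y _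
    rw [← Finset.sum_neg_distrib]
    apply Finset.sum_congr rfl; intro y' _
    rw [hanti]; ring
  have h3 : ∑ y ∈ Q, ∑ y' ∈ Q, G y y' * e y = -(b * pLap N p v x) := by
    rw [Finset.sum_eq_single_of_mem x hx]
    · rw [← Finset.sum_mul, he, Pi.single_eq_same, pLap_fin, ← hQ, mul_comm, ← mul_neg,
        ← Finset.sum_neg_distrib]
      congr 1
      apply Finset.sum_congr rfl; intro y' _
      simp only [hG]
      split_ifs
      · rw [← rho_neg, neg_sub]
      · simp
    · intro y _ hy
      rw [he, Pi.single_eq_of_ne hy]; simp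
  rw [h1, h2, h3]; ring

namespace Hyp
variable {N : ℕ} {p : ℝ} {V : Vtx N → ℝ} {f : Vtx N → ℝ → ℝ} {T : ℕ}

theorem PD_cont (h : Hyp p V f T) (x : Vtx N) : Continuous (PD p V f x) := by
  have hr := rho_cont h.hp
  have hf := h.hfc x
  have e : PD p V f x = fun v => -(∑ y ∈ nbh {x}, if LatAdj x y then rho p (v y - v x) else 0) +
      V x * rho p (v x) - f x (v x) := by
    funext v
    rw [← pLap_fin]; unfold PD rho; ring
  rw [e]
  refine Continuous.sub (Continuous.add (Continuous.neg ?_) ?_) ?_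
  · apply continuous_finsetSum
    intro y _
    by_cases ha : LatAdj x y
    · simp only [if_pos ha]; fun_prop
    · simp only [if_neg ha]; exact continuous_const
  · fun_prop
  · fun_prop

theorem memE_pert (h : Hyp p V f T) {w : Vtx N → ℝ} (hw : memE N p w) (x : Vtx N) (b θ : ℝ) :
    memE N p (w + θ • Pi.single x b) :=
  memE_congr {x} hw fun y hy => by
    rw [Finset.mem_singleton] at hy
    simp [Pi.single_eq_of_ne hy]

theorem pert_off (w : Vtx N → ℝ) (x : Vtx N) (b θ : ℝ) :
    ∀ y ∉ ({x} : Finset (Vtx N)), (w + θ • (Pi.single x b : Vtx N → ℝ)) y = w y := fun y hy => by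
    rw [Finset.mem_singleton] at hy
    simp [Pi.single_eq_of_ne hy]

theorem Phi_hasDeriv (h : Hyp p V f T) {w : Vtx N → ℝ} (hw : memE N p w) (x : Vtx N) (b θ : ℝ) :
    HasDerivAt (fun θ : ℝ => PhiFun N p V f (w + θ • Pi.single x b))
      (b * PD p V f x (w + θ • Pi.single x b)) θ := by
  have hp0 := h.p0
  set e : Vtx N → ℝ := Pi.single x b with he
  have hex : e x = b := by rw [he, Pi.single_eq_same]
  have e1 : (fun θ : ℝ => PhiFun N p V f (w + θ • e)) = fun θ : ℝ => PhiFun N p V f w +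
      ((1/p) * (LJ p V {x} (w + θ • e) - LJ p V {x} w) - (Fprim f x ((w + θ • e) x) - Fprim f x (w x))) := by
    funext θ
    have h1 := h.J_diff {x} (h.memE_pert hw x b θ) hw (pert_off w x b θ)
    have h2 := sum_diff (h.Fsum (h.memE_pert hw x b θ)) (h.Fsum hw) {x} (by
      intro y hy; simp only [pert_off w x b θ y hy])
    simp only [Finset.sum_singleton] at h2
    rw [← he] at h1 h2
    rw [← h1, ← h2]
    unfold PhiFun
    ring
  have hcoord : ∀ y : Vtx N, HasDerivAt (fun θ : ℝ => (w + θ • e) y) (e y) θ := by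
    intro y
    simp only [Pi.add_apply, Pi.smul_apply, smul_eq_mul]
    simpa using ((hasDerivAt_id θ).mul_const (e y)).const_add (w y)
  set v := w + θ • e with hv
  have hLJ : HasDerivAt (fun θ : ℝ => LJ p V {x} (w + θ • e))
      ((1/2) * ∑ z ∈ nbh {x} ×ˢ nbh {x}, p * (if LatAdj z.1 z.2 then
        rho p (v z.1 - v z.2) * (e z.1 - e z.2) else 0) + V x * (p * rho p (v x) * e x)) θ := by
    unfold LJ
    simp only [Finset.sum_singleton]
    refine HasDerivAt.add (HasDerivAt.const_mul _ ?_) (HasDerivAt.const_mul _ ?_)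
    · refine HasDerivAt.fun_sum fun z _ => ?_
      by_cases ha : LatAdj z.1 z.2
      · simp only [if_pos ha]
        rw [← mul_assoc]
        exact (rho_deriv h.hp (v z.1 - v z.2)).comp θ ((hcoord z.1).sub (hcoord z.2))
      · simp only [if_neg ha, mul_zero]
        exact hasDerivAt_const _ _
    · exact (rho_deriv h.hp (v x)).comp θ (hcoord x)
  have hF : HasDerivAt (fun θ : ℝ => Fprim f x ((w + θ • e) x)) (f x (v x) * e x) θ :=
    HasDerivAt.comp (h₂ := Fprim f x) (h := fun θ : ℝ => (w + θ • e) x) θ (h.Fderiv x (v x)) (hcoord x)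
  rw [e1]
  have := (((hLJ.sub_const (LJ p V {x} w)).const_mul (1/p)).sub (hF.sub_const (Fprim f x (w x)))).const_add (PhiFun N p V f w)
  refine this.congr_deriv ?_
  rw [← Finset.mul_sum, grad_fin p v x b, hex]
  unfold PD rho
  field_simp

theorem K_neh (h : Hyp p V f T) {u : Vtx N → ℝ} (hu : u ∈ Nehari N p V f) {t : ℝ} (ht : 0 < t) :
    PhiDeriv N p V f (t • u) (t • u) = ∑' x, (t ^ p * kk f x (u x) - kk f x (t * u x)) := by
  have h3 := hu.2.2
  rw [phi_diag h.p0, sub_eq_zero] at h3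
  have := (h.ksum (memE_smul hu.1 ht))
  simp only [Pi.smul_apply, smul_eq_mul] at this
  rw [phi_diag h.p0, J_smul u ht, h3, ((h.ksum hu.1).mul_left _).tsum_sub this, tsum_mul_left]
  rfl

theorem K_sign1 (h : Hyp p V f T) {u : Vtx N → ℝ} (hu : u ∈ Nehari N p V f) {t : ℝ} (ht : 0 < t)
    (ht1 : t < 1) : 0 < PhiDeriv N p V f (t • u) (t • u) := by
  rw [h.K_neh hu ht]
  have hs := (h.ksum (memE_smul hu.1 ht))
  simp only [Pi.smul_apply, smul_eq_mul] at hs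
  obtain ⟨x, hx⟩ := Function.ne_iff.1 hu.2.1
  refine (((h.ksum hu.1).mul_left _).sub hs).tsum_pos (fun y => ?_) x ?_
  · have := h.kmono y (u y) ht ht1.le
    simp only [one_mul, Real.one_rpow, mul_one] at this
    linarith
  · have := h.kmono_strict x hx ht ht1
    simp only [one_mul, Real.one_rpow, mul_one] at this
    linarith

theorem K_sign2 (h : Hyp p V f T) {u : Vtx N → ℝ} (hu : u ∈ Nehari N p V f) {t : ℝ} 
    (ht1 : 1 < t) : PhiDeriv N p V f (t • u) (t • u) < 0 := by
  have ht : 0 < t := one_pos.trans ht1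
  rw [h.K_neh hu ht]
  have hs := (h.ksum (memE_smul hu.1 ht))
  simp only [Pi.smul_apply, smul_eq_mul] at hs
  obtain ⟨x, hx⟩ := Function.ne_iff.1 hu.2.1
  have := (((h.ksum hu.1).mul_left (t ^ p)).sub hs).neg.tsum_pos (fun y => ?_) x ?_
  · rw [tsum_neg] at this; linarith
  · have := h.kmono y (u y) one_pos ht1.le
    simp only [one_mul, Real.one_rpow, mul_one] at this
    linarith
  · have := h.kmono_strict x hx one_pos ht1
    simp only [one_mul, Real.one_rpow, mul_one] at this
    linarith

theorem min_solves (h : Hyp p V f T) {u : Vtx N → ℝ} (hu : u ∈ Nehari N p V f)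
    (hmin : ∀ v ∈ Nehari N p V f, PhiFun N p V f u ≤ PhiFun N p V f v) (x : Vtx N) :
    PD p V f x u = 0 := by
  by_contra hD
  set D0 := PD p V f x u with hD0
  set e : Vtx N → ℝ := Pi.single x (-D0) with he
  have hcont : Continuous (fun z : ℝ × ℝ => -D0 * PD p V f x (z.1 • u + z.2 • e)) := by
    have := h.PD_cont x
    fun_prop
  have hneg : -D0 * PD p V f x ((1:ℝ) • u + (0:ℝ) • e) < 0 := by
    rw [one_smul, zero_smul, add_zero, ← hD0]
    have : 0 < D0 * D0 := mul_self_pos.2 hD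
    linarith
  have hev := (hcont.tendsto (1, 0)).eventually (gt_mem_nhds hneg)
  obtain ⟨ε, hε, H⟩ := Metric.eventually_nhds_iff.1 hev
  set η := min (1/2) (ε / 4) with hη
  have hη0 : 0 < η := by rw [hη]; positivity
  have hη1 : η ≤ 1/2 := min_le_left _ _
  have hη2 : η ≤ ε / 4 := min_le_right _ _
  have hlt : ∀ t θ : ℝ, t ∈ Set.Icc (1 - η) (1 + η) → 0 < θ → θ ≤ 2 * η →
      PhiFun N p V f (t • u + θ • e) < PhiFun N p V f u := by
    intro t θ ht hθ hθ2
    have ht0 : 0 < t := by linarith [ht.1]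
    have hw := memE_smul hu.1 ht0
    refine lt_of_lt_of_le ?_ (h.Phi_max hu ht0)
    have : StrictAntiOn (fun θ : ℝ => PhiFun N p V f (t • u + θ • e)) (Set.Icc 0 θ) := by
      apply strictAntiOn_of_deriv_neg (convex_Icc 0 θ)
      · exact fun r _ => (h.Phi_hasDeriv hw x (-D0) r).continuousAt.continuousWithinAt
      · intro r hr
        rw [interior_Icc] at hr
        rw [(h.Phi_hasDeriv hw x (-D0) r).deriv]
        refine H (y := (t, r)) ?_
        rw [Prod.dist_eq, max_lt_iff, Real.dist_eq, Real.dist_eq, abs_lt, abs_lt]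
        dsimp only
        refine ⟨⟨?_, ?_⟩, ?_, ?_⟩ <;> linarith [ht.1, ht.2, hr.1, hr.2]
    have := this ⟨le_rfl, hθ.le⟩ ⟨hθ.le, le_rfl⟩ hθ
    simpa using this
  have hpE : ∀ s, memE N p (u + s • e) := fun s => h.memE_pert hu.1 x (-D0) s
  have hKt : ∀ τ : ℝ, 0 < τ → Tendsto (fun s : ℝ => PhiDeriv N p V f (τ • (u + s • e)) (τ • (u + s • e)))
      (𝓝 0) (𝓝 (PhiDeriv N p V f (τ • u) (τ • u))) := by
    intro τ hτ
    have h1 : (fun s : ℝ => PhiDeriv N p V f (τ • (u + s • e)) (τ • (u + s • e))) = fun s : ℝ =>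
        PhiDeriv N p V f (τ • u) (τ • u) + (LK p V f {x} (τ • (u + s • e)) - LK p V f {x} (τ • u)) := by
      funext s
      rw [← h.K_diff {x} (memE_smul (hpE s) hτ) (memE_smul hu.1 hτ) (fun y hy => by
        rw [Pi.smul_apply, Pi.smul_apply, pert_off u x (-D0) s y hy])]
      ring
    rw [h1]
    have hc : Continuous fun s : ℝ =>
        PhiDeriv N p V f (τ • u) (τ • u) + (LK p V f {x} (τ • (u + s • e)) - LK p V f {x} (τ • u)) := by
      have := h.LK_cont {x}
      fun_prop
    have := hc.tendsto 0
    simpa using this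
  have hm : 0 < 1 - η := by linarith
  have hev1 := (hKt (1 - η) hm).eventually (lt_mem_nhds (h.K_sign1 hu hm (by linarith)))
  have hev2 := (hKt (1 + η) (by linarith)).eventually (gt_mem_nhds (h.K_sign2 hu (t := 1 + η) (by linarith)))
  have hev3 : ∀ᶠ s : ℝ in 𝓝[>] 0, s < η := nhdsWithin_le_nhds (gt_mem_nhds hη0)
  obtain ⟨s, ⟨⟨hs1, hs2⟩, hs3⟩, hs0⟩ := ((((hev1.and hev2).filter_mono nhdsWithin_le_nhds).and hev3).and
    (self_mem_nhdsWithin (s := Set.Ioi (0:ℝ)))).exists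
  have hs0 : 0 < s := hs0
  obtain ⟨t, ht, hKt0⟩ := h.K_ivt (hpE s) hm (by linarith) hs1.le hs2.le
  have ht0 : 0 < t := hm.trans_le ht.1
  have hne : u + s • e ≠ 0 := by
    intro h0
    rw [h0, smul_zero, h.K_zero] at hs1
    exact lt_irrefl _ hs1
  have hN : t • (u + s • e) ∈ Nehari N p V f :=
    ⟨memE_smul (hpE s) ht0, smul_ne_zero ht0.ne' hne, hKt0⟩
  have h1 := hmin _ hN
  have h2 := hlt t (t * s) ht (by positivity) (by nlinarith [ht.2])
  rw [smul_add, smul_smul] at h1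
  linarith

theorem sol_nehari (h : Hyp p V f T) {w : Vtx N → ℝ} (hw : memE N p w) (h0 : w ≠ 0)
    (hs : ∀ x, -pLap N p w x + V x * |w x| ^ (p - 2) * w x = f x (w x)) : w ∈ Nehari N p V f := by
  refine ⟨hw, h0, ?_⟩
  set G : Vtx N × Vtx N → ℝ := fun z => if LatAdj z.1 z.2 then rho p (w z.2 - w z.1) else 0 with hG
  have hsum1 : Summable fun z : Vtx N × Vtx N => G z * w z.1 := by
    refine Summable.of_norm_bounded ((energy_summable h.p0 hw).1.add
      (adj_sum (fun x => |w x| ^ p) (fun x => by positivity) hw).1) (fun z => ?_)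
    simp only [hG]
    split_ifs
    · rw [Real.norm_eq_abs, abs_sub_comm (w z.1)]
      exact rho_mul_le h.hp _ _
    · simp
  have hswap : (fun z : Vtx N × Vtx N => G z * w z.2) =
      (fun z => -(G z * w z.1)) ∘ Equiv.prodComm _ _ := by
    funext z
    change G z * w z.2 = -((if LatAdj z.2 z.1 then rho p (w z.1 - w z.2) else 0) * w z.2)
    simp only [hG]
    by_cases ha : LatAdj z.1 z.2
    · rw [if_pos ha, if_pos (adj_symm.1 ha), ← neg_sub (w z.2), rho_neg]; ring
    · rw [if_neg ha, if_neg (fun h => ha (adj_symm.1 h))]; simp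
  have hsum2 : Summable fun z : Vtx N × Vtx N => G z * w z.2 := by
    rw [hswap]; exact (Equiv.prodComm _ _).summable_iff.2 hsum1.neg
  have ht2 : ∑' z, G z * w z.2 = - ∑' z, G z * w z.1 := by
    rw [hswap, ← tsum_neg]
    exact (Equiv.prodComm _ _).tsum_eq (fun z : Vtx N × Vtx N => -(G z * w z.1))
  have ht1 : ∑' z, G z * w z.1 = ∑' x, pLap N p w x * w x := by
    rw [hsum1.tsum_prod]
    apply tsum_congr
    intro x
    change ∑' c, G (x, c) * w x = _
    rw [tsum_mul_right]
    rfl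
  have hgrad : gradPair N p w w = -∑' x, pLap N p w x * w x := by
    have e : gradPair N p w w = 1/2 * ∑' z, (G z * w z.2 - G z * w z.1) := by
      unfold gradPair
      congr 1
      apply tsum_congr
      intro z
      simp only [hG]
      split_ifs
      · unfold rho; ring
      · simp
    rw [e, hsum2.tsum_sub hsum1, ht2, ht1]; ring
  have hV : Summable fun x => V x * |w x| ^ (p - 2) * w x * w x := by
    refine Summable.of_norm_bounded ((h.Vsum hw).add (h.Vsum hw)) fun x => ?_
    have h1 := rho_mul_le h.hp (w x) (w x)
    have h2 := (h.hVpos x).le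
    have e : V x * |w x| ^ (p - 2) * w x * w x = V x * (rho p (w x) * w x) := by unfold rho; ring
    rw [e, norm_mul, Real.norm_of_nonneg h2, Real.norm_eq_abs, ← mul_add]
    exact mul_le_mul_of_nonneg_left h1 h2
  have hk := h.ksum hw
  have hlap : ∑' x, pLap N p w x * w x = ∑' x, (V x * |w x| ^ (p - 2) * w x * w x - kk f x (w x)) := by
    apply tsum_congr
    intro x
    unfold kk
    rw [← hs x]; ring
  unfold PhiDeriv
  rw [hgrad, hlap, hV.tsum_sub hk]
  unfold kk
  ring

end Hyp
/-- Main theorem: the Nehari level is positive and attained, and every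
minimizer on the Nehari manifold is a ground state solution of the p-Laplacian
equation on the lattice graph. -/
theorem stmt_17 (N : ℕ) (p q : ℝ) (hp : 1 < p) (hq : p < q)
    (V : Vtx N → ℝ) (f : Vtx N → ℝ → ℝ) (T : ℕ) (hT : 0 < T)
    (hA1 : ∃ a : ℝ, 0 < a ∧ ∀ x u, |f x u| ≤ a * (1 + |u| ^ (q - 1)))
    (hfc : ∀ x, Continuous (f x))
    (hA2V : ∀ x (i : Fin N), V (x + (T : ℤ) • Pi.single i 1) = V x)
    (hA2f : ∀ x (i : Fin N) (u : ℝ), f (x + (T : ℤ) • Pi.single i 1) u = f x u)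
    (hVpos : ∀ x, 0 < V x)
    (hA3 : ∀ ε > (0:ℝ), ∃ δ > (0:ℝ), ∀ x u, |u| < δ → |f x u| ≤ ε * |u| ^ (p - 1))
    (hA4 : ∀ x, StrictMonoOn (fun u => f x u / |u| ^ (p - 1)) (Set.Iio 0) ∧
               StrictMonoOn (fun u => f x u / |u| ^ (p - 1)) (Set.Ioi 0))
    (hA5 : ∀ M : ℝ, ∃ R > (0:ℝ), ∀ x u, R ≤ |u| → M ≤ Fprim f x u / |u| ^ p) :
    (∃ u ∈ Nehari N p V f,
        (∀ v ∈ Nehari N p V f, PhiFun N p V f u ≤ PhiFun N p V f v) ∧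
        0 < PhiFun N p V f u) ∧
    (∀ u ∈ Nehari N p V f,
      (∀ v ∈ Nehari N p V f, PhiFun N p V f u ≤ PhiFun N p V f v) →
        ((∀ x, -pLap N p u x + V x * |u x| ^ (p - 2) * u x = f x (u x)) ∧
         u ≠ 0 ∧
         (∀ w : Vtx N → ℝ, memE N p w → w ≠ 0 →
            (∀ x, -pLap N p w x + V x * |w x| ^ (p - 2) * w x = f x (w x)) →
            PhiFun N p V f u ≤ PhiFun N p V f w))) := by
  have h : Hyp p V f T := ⟨hp, hT, hfc, hA2V, hA2f, hVpos, hA3, hA4, hA5⟩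
  refine ⟨?_, ?_⟩
  · obtain ⟨u, hu, hmin⟩ := h.exists_min
    exact ⟨u, hu, hmin, h.Phi_pos hu⟩
  · intro u hu hmin
    refine ⟨fun x => ?_, hu.2.1, fun w hw h0 hs => hmin w (h.sol_nehari hw h0 hs)⟩
    have := h.min_solves hu hmin x
    unfold PD at this
    linarith
end
end
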